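/- arXiv:math/0703532 — 2 statements merged into one kernel-verified Lean document; each statement's English description precedes it below -/
import Mathlib

section
/- Fix n ≥ 2 and let S be a finite subset of SL(n, ℤ) whose elements generate SL(n, ℤ) as a group. For each L, among the |S|^L words w : Fin L → S, let G(L) be the number of words whose product M_w has the property that the characteristic polynomial of the underlying integer matrix of M_w has full symmetric Galois group over ℚ. Then G(L) / |S|^L tends to 1 as L tends to infinity. -/
section PartA
open Filter Topology

section RandomWalk
open Pointwise

theorem rw_exists_pow_eq_univ {H : Type*} [Group H] [Fintype H] [DecidableEq H]
    (T : Finset H) (hT : T.Nonempty) (hgen : Subgroup.closure (T : Set H) = ⊤)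
    (hperf : commutator H = ⊤) : ∃ k : ℕ, T ^ k = Finset.univ := by
  obtain ⟨s0, hs0⟩ := hT
  have hle : ∀ k, (T ^ k).card ≤ (T ^ (k+1)).card := by
    intro k
    have : s0 • (T ^ k) ⊆ T ^ (k+1) := by
      rw [pow_succ']
      exact Finset.smul_finset_subset_smul hs0
    calc _ = (s0 • (T ^ k)).card := by simp
      _ ≤ _ := Finset.card_le_card this
  obtain ⟨k, hk⟩ : ∃ k, (T ^ (k+1)).card = (T ^ k).card := by
    by_contra! hcon
    have hlt : StrictMono (fun k => (T ^ k).card) :=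
      strictMono_nat_of_lt_succ (fun k => lt_of_le_of_ne (hle k) (hcon k).symm)
    have := hlt.le_apply (x := Fintype.card H + 1)
    have h2 := Finset.card_le_univ (T ^ (Fintype.card H + 1))
    omega
  refine ⟨k, ?_⟩
  set A := T ^ k with hA
  have hL : ∀ s ∈ T, s • A = T ^ (k+1) := by
    intro s hs
    apply Finset.eq_of_subset_of_card_le
    · rw [pow_succ']; exact Finset.smul_finset_subset_smul hs
    · rw [hk]; simp
  have hR : ∀ s ∈ T, A * {s} = T ^ (k+1) := by
    intro s hs
    apply Finset.eq_of_subset_of_card_le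
    · rw [pow_succ]; exact Finset.mul_subset_mul_left (by simpa using hs)
    · rw [hk]; simp
  let K := MulAction.stabilizer H A
  have hconj : ∀ s ∈ T, ∀ h, h ∈ K ↔ s⁻¹ * h * s ∈ K := by
    intro s hs h
    simp only [K, MulAction.mem_stabilizer_iff]
    have e1 : (s⁻¹ * h * s) • A = A ↔ h • (s • A) = s • A := by
      rw [mul_smul, mul_smul, inv_smul_eq_iff]
    rw [e1, hL s hs, ← hR s hs, ← smul_mul_assoc]
    constructor
    · intro h; rw [h]
    · intro h
      have := congrArg (· * ({s⁻¹} : Finset H)) h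
      simpa [mul_assoc, Finset.singleton_one] using this
  have hnormal : K.Normal := by
    rw [← Subgroup.normalizer_eq_top_iff, eq_top_iff, ← hgen, Subgroup.closure_le]
    intro s hs
    rw [SetLike.mem_coe, Subgroup.mem_normalizer_iff]
    intro h
    rw [hconj s hs (s * h * s⁻¹)]
    simp [mul_assoc]
  have hsup : K ⊔ Subgroup.zpowers s0 = ⊤ := by
    rw [eq_top_iff, ← hgen, Subgroup.closure_le]
    intro s hs
    have h1 : s * s0⁻¹ ∈ K := by
      rw [hconj s0 hs0]
      have : s0⁻¹ * (s * s0⁻¹) * s0 = s0⁻¹ * s := by group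
      rw [this, MulAction.mem_stabilizer_iff, mul_smul, hL s hs, inv_smul_eq_iff, hL s0 hs0]
    have : s = (s * s0⁻¹) * s0 := by group
    rw [this]
    exact mul_mem (Subgroup.mem_sup_left h1) (Subgroup.mem_sup_right (Subgroup.mem_zpowers s0))
  have hKtop : K = ⊤ := by
    rw [eq_top_iff, ← hperf]
    exact Subgroup.Normal.commutator_le_of_self_sup_commutative_eq_top hsup inferInstance
  have hAne : A.Nonempty := Finset.Nonempty.pow ⟨s0, hs0⟩
  obtain ⟨a, ha⟩ := hAne
  ext x
  simp only [Finset.mem_univ, iff_true]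
  have : x * a⁻¹ ∈ K := by rw [hKtop]; trivial
  rw [MulAction.mem_stabilizer_iff] at this
  rw [← this]
  have h3 := Finset.smul_mem_smul_finset (a := x * a⁻¹) ha
  simpa using h3

/-- averaging of `φ` along words of length `L` -/
noncomputable def rwAvg {H ι : Type*} [Group H] [Fintype ι] (s : ι → H) (L : ℕ) (φ : H → ℝ) : H → ℝ :=
  fun h => (∑ w : Fin L → ι, φ ((List.ofFn fun i => s (w i)).prod * h)) / (Fintype.card ι : ℝ) ^ L

variable {H ι : Type*} [Group H] [Fintype H] [Fintype ι] [Nonempty ι] (s : ι → H)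

theorem rwAvg_add (L M : ℕ) (φ : H → ℝ) : rwAvg s (L + M) φ = rwAvg s M (rwAvg s L φ) := by
  funext h
  unfold rwAvg
  rw [← Finset.sum_div, div_div, ← pow_add]
  congr 1
  rw [← (Fin.appendEquiv L M).sum_comp, Fintype.sum_prod_type, Finset.sum_comm]
  refine Finset.sum_congr rfl fun b _ => Finset.sum_congr rfl fun a _ => ?_
  congr 1
  rw [← mul_assoc, ← List.prod_append]
  congr 2
  rw [← List.ofFn_fin_append]
  congr 1
  funext i
  refine Fin.addCases (fun i => ?_) (fun i => ?_) i <;> simp [Fin.appendEquiv]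

theorem rwAvg_norm_le (L : ℕ) (φ : H → ℝ) : ‖rwAvg s L φ‖ ≤ ‖φ‖ := by
  rw [pi_norm_le_iff_of_nonneg (norm_nonneg _)]
  intro h
  unfold rwAvg
  have hpos : (0:ℝ) < (Fintype.card ι : ℝ) ^ L := by
    have : 0 < Fintype.card ι := Fintype.card_pos
    positivity
  rw [norm_div, Real.norm_of_nonneg hpos.le, div_le_iff₀ hpos]
  calc _ ≤ ∑ w : Fin L → ι, ‖φ‖ := (norm_sum_le _ _).trans (Finset.sum_le_sum fun w _ => norm_le_pi_norm φ _)
    _ = _ := by simp [mul_comm]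

theorem rwAvg_mean_zero (L : ℕ) (φ : H → ℝ) (h0 : ∑ h, φ h = 0) : ∑ h, rwAvg s L φ h = 0 := by
  unfold rwAvg
  rw [← Finset.sum_div, Finset.sum_comm]
  have : ∀ w : Fin L → ι, ∑ h, φ ((List.ofFn fun i => s (w i)).prod * h) = 0 := by
    intro w
    rw [← h0]
    exact Equiv.sum_comp (Equiv.mulLeft _) φ
  simp [this]

theorem rwAvg_contract (hgen : Subgroup.closure (Set.range s) = ⊤) (hperf : commutator H = ⊤) :
    ∃ k : ℕ, ∃ r : ℝ, 0 ≤ r ∧ r < 1 ∧ ∀ φ : H → ℝ, ∑ h, φ h = 0 → ‖rwAvg s k φ‖ ≤ r * ‖φ‖ := by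
  classical
  obtain ⟨k, hk⟩ := rw_exists_pow_eq_univ (Finset.univ.image s) (by simp) (by simpa using hgen) hperf
  have hw : ∀ g : H, ∃ w : Fin k → ι, (List.ofFn fun i => s (w i)).prod = g := by
    intro g
    have hg : g ∈ (Finset.univ.image s) ^ k := by rw [hk]; simp
    obtain ⟨f, hf⟩ := Finset.mem_pow.mp hg
    have : ∀ i, ∃ j, s j = f i := by
      intro i
      have := Finset.mem_image.mp (f i).2
      simpa only [Finset.mem_univ, true_and] using this
    choose w hw using this
    exact ⟨w, by simp_rw [hw]; exact hf⟩
  choose w hw using hw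
  have hinj : Function.Injective w := fun a b hab => by rw [← hw a, ← hw b, hab]
  let W := Finset.univ.image w
  have hWc : W.card = Fintype.card H := by
    simp [W, Finset.card_image_of_injective _ hinj]
  have hpos : (0:ℝ) < (Fintype.card ι : ℝ) ^ k := by
    have : 0 < Fintype.card ι := Fintype.card_pos
    positivity
  have hcc : (Wᶜ.card : ℝ) = (Fintype.card ι : ℝ) ^ k - Fintype.card H := by
    rw [Finset.card_compl, Nat.cast_sub (Finset.card_le_univ _), hWc]; simp
  refine ⟨k, (Wᶜ.card : ℝ) / (Fintype.card ι : ℝ) ^ k, by positivity, ?_, ?_⟩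
  · rw [div_lt_one hpos, hcc]
    have : (0:ℝ) < Fintype.card H := by exact_mod_cast Fintype.card_pos
    linarith
  · intro φ h0
    rw [pi_norm_le_iff_of_nonneg (by positivity)]
    intro h
    unfold rwAvg
    rw [norm_div, Real.norm_of_nonneg hpos.le, div_le_iff₀ hpos]
    have h1 : ∑ v ∈ W, φ ((List.ofFn fun i => s (v i)).prod * h) = 0 := by
      rw [Finset.sum_image (fun a _ b _ hab => hinj hab)]
      simp_rw [hw]
      rw [← h0]
      exact Equiv.sum_comp (Equiv.mulRight h) φ
    rw [← Finset.sum_add_sum_compl W, h1, zero_add]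
    calc _ ≤ ∑ v ∈ Wᶜ, ‖φ‖ := (norm_sum_le _ _).trans (Finset.sum_le_sum fun w _ => norm_le_pi_norm φ _)
      _ = _ := by simp only [Finset.sum_const, nsmul_eq_mul]; field_simp

theorem rwAvg_tendsto_zero (hgen : Subgroup.closure (Set.range s) = ⊤) (hperf : commutator H = ⊤)
    (φ : H → ℝ) (h0 : ∑ h, φ h = 0) : Tendsto (fun L => ‖rwAvg s L φ‖) atTop (𝓝 0) := by
  obtain ⟨k, r, hr0, hr1, hr⟩ := rwAvg_contract s hgen hperf
  have hq : ∀ q, ‖rwAvg s (k * q) φ‖ ≤ r ^ q * ‖φ‖ := by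
    intro q
    induction q with
    | zero => simpa using rwAvg_norm_le s 0 φ
    | succ q ih =>
      rw [Nat.mul_succ, rwAvg_add]
      refine (hr _ (rwAvg_mean_zero s _ _ h0)).trans ?_
      rw [pow_succ']
      nlinarith
  rw [Metric.tendsto_atTop]
  intro ε hε
  have ht : Tendsto (fun q : ℕ => r ^ q * ‖φ‖) atTop (𝓝 0) := by
    simpa using (tendsto_pow_atTop_nhds_zero_of_lt_one hr0 hr1).mul_const ‖φ‖
  obtain ⟨q, hqq⟩ := (ht.eventually (gt_mem_nhds hε)).exists
  refine ⟨k * q, fun L hL => ?_⟩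
  obtain ⟨m, rfl⟩ := Nat.exists_eq_add_of_le hL
  rw [dist_zero_right, norm_norm, rwAvg_add]
  exact ((rwAvg_norm_le s _ _).trans (hq q)).trans_lt hqq

theorem rw_equidist (hgen : Subgroup.closure (Set.range s) = ⊤) (hperf : commutator H = ⊤)
    (B : Finset H) [DecidableEq H] :
    Tendsto (fun L : ℕ => ((Finset.univ.filter fun w : Fin L → ι =>
      (List.ofFn fun i => s (w i)).prod ∈ B).card : ℝ) / (Fintype.card ι : ℝ) ^ L) atTop
      (𝓝 ((B.card : ℝ) / Fintype.card H)) := by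
  have hHpos : (0:ℝ) < Fintype.card H := by exact_mod_cast Fintype.card_pos
  set c : ℝ := (B.card : ℝ) / Fintype.card H with hc
  let φ : H → ℝ := fun h => (if h ∈ B then 1 else 0) - c
  have h0 : ∑ h, φ h = 0 := by
    simp only [φ, Finset.sum_sub_distrib, Finset.sum_const, Finset.card_univ, nsmul_eq_mul, hc]
    simp; field_simp; simp
  have ht := rwAvg_tendsto_zero s hgen hperf φ h0
  have ht1 : Tendsto (fun L => rwAvg s L φ 1) atTop (𝓝 0) := by
    apply squeeze_zero_norm (fun L => norm_le_pi_norm (rwAvg s L φ) 1) ht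
  have : ∀ L, ((Finset.univ.filter fun w : Fin L → ι =>
      (List.ofFn fun i => s (w i)).prod ∈ B).card : ℝ) / (Fintype.card ι : ℝ) ^ L = rwAvg s L φ 1 + c := by
    intro L
    have hpos : (0:ℝ) < (Fintype.card ι : ℝ) ^ L := by
      have : 0 < Fintype.card ι := Fintype.card_pos
      positivity
    unfold rwAvg
    simp only [φ, mul_one, Finset.sum_sub_distrib, Finset.sum_const, Finset.card_univ, nsmul_eq_mul,
      Finset.sum_boole, Fintype.card_fun, Fintype.card_fin, Nat.cast_pow]
    field_simp
    ring
  simp_rw [this]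
  simpa using ht1.add_const c

end RandomWalk

end PartA

section PartB

section SLGen
open Matrix Matrix.SpecialLinearGroup

theorem sl_ext {ι R : Type*} [Fintype ι] [DecidableEq ι] [CommRing R] {A B : SpecialLinearGroup ι R}
    (h : (A : Matrix ι ι R) = (B : Matrix ι ι R)) : A = B := Subtype.ext h

theorem sl_map_transvection {ι R R' : Type*} [Fintype ι] [DecidableEq ι] [CommRing R] [CommRing R']
    (f : R →+* R') {i j : ι} (hij : i ≠ j) (c : R) :
    SpecialLinearGroup.map f (SpecialLinearGroup.transvection hij c) =
      SpecialLinearGroup.transvection hij (f c) := by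
  apply sl_ext
  ext a b
  simp [transvection_coe, Matrix.single_apply, Matrix.one_apply, apply_ite f]

theorem sl_diag2n_decompose {ι F : Type*} [Fintype ι] [DecidableEq ι] [Field F] {i j : ι} (hij : i ≠ j)
    (a : F) (ha : a ≠ 0) :
    diag2n hij a ha = SpecialLinearGroup.transvection hij a *
      SpecialLinearGroup.transvection hij.symm (- a⁻¹) *
      SpecialLinearGroup.transvection hij a *
      SpecialLinearGroup.transvection hij (-1) *
      SpecialLinearGroup.transvection hij.symm 1 *
      SpecialLinearGroup.transvection hij (-1) := by
  apply sl_ext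
  change diagonal (fun k ↦ if k = i then a else if k = j then a⁻¹ else 1) =
    (1 + single i j a) * (1 + single j i (-a⁻¹)) * (1 + single i j a) * (1 + single i j (-1)) *
      (1 + single j i 1) * (1 + single i j (-1))
  simp only [mul_add, add_mul, mul_one, one_mul,
    single_mul_single_same, single_mul_single_of_ne _ _ _ _ hij, single_mul_single_of_ne _ _ _ _ hij.symm, mul_neg, neg_mul,
    Matrix.zero_mul, Matrix.mul_zero, add_zero, zero_add, mul_inv_cancel₀ ha, inv_mul_cancel₀ ha, neg_neg]
  ext k l
  simp only [Matrix.add_apply, Matrix.single_apply, Matrix.diagonal_apply, Matrix.one_apply]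
  by_cases hki : k = i <;> by_cases hkj : k = j <;> by_cases hli : l = i <;> by_cases hlj : l = j <;>
    grind

theorem sl_eq_top_of_transvection {n : ℕ} (hn : 2 ≤ n) {F : Type*} [Field F]
    (K : Subgroup (SpecialLinearGroup (Fin n) F))
    (hK : ∀ (i j : Fin n) (hij : i ≠ j) (c : F), SpecialLinearGroup.transvection hij c ∈ K) : K = ⊤ := by
  have : Nontrivial (Fin n) := Fin.nontrivial_iff_two_le.mpr hn
  rw [eq_top_iff]
  intro M _
  refine diagonal_transvection_induction' (fun M => M ∈ K) M ?_ hK (fun A B => mul_mem)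
  intro i j hij c hc
  rw [sl_diag2n_decompose]
  exact mul_mem (mul_mem (mul_mem (mul_mem (mul_mem (hK _ _ _ _) (hK _ _ _ _)) (hK _ _ _ _)) (hK _ _ _ _))
    (hK _ _ _ _)) (hK _ _ _ _)

open scoped commutatorElement in
theorem sl_transvection_commutator {ι F : Type*} [Fintype ι] [DecidableEq ι] [Field F] {i j : ι} (hij : i ≠ j)
    (a : F) (ha : a ≠ 0) (b : F) :
    ⁅diag2n hij a ha, SpecialLinearGroup.transvection hij b⁆ =
      SpecialLinearGroup.transvection hij (b * (a ^ 2 - 1)) := by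
  rw [commutatorElement_def, mul_inv_eq_iff_eq_mul, mul_inv_eq_iff_eq_mul]
  apply sl_ext
  change diagonal (fun k ↦ if k = i then a else if k = j then a⁻¹ else 1) * (1 + single i j b) =
    (1 + single i j (b * (a ^ 2 - 1))) * (1 + single i j b) *
      diagonal (fun k ↦ if k = i then a else if k = j then a⁻¹ else 1)
  simp only [mul_add, add_mul, mul_one, one_mul, single_mul_single_of_ne _ _ _ _ hij.symm]
  ext k l
  simp only [Matrix.add_apply, Matrix.diagonal_mul, Matrix.mul_diagonal, Matrix.zero_apply, Matrix.single_apply,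
    Matrix.diagonal_apply]
  by_cases hki : k = i <;> by_cases hkj : k = j <;> by_cases hli : l = i <;> by_cases hlj : l = j <;>
    grind

variable {n : ℕ} {κ : Type} [Fintype κ] [DecidableEq κ] (p : κ → ℕ) [hp : ∀ i, Fact (p i).Prime]

theorem slpi_eq_top (hn : 2 ≤ n) (K : Subgroup (∀ k, SpecialLinearGroup (Fin n) (ZMod (p k))))
    (hK : ∀ (k : κ) (i j : Fin n) (hij : i ≠ j) (c : ZMod (p k)),
      Pi.mulSingle k (SpecialLinearGroup.transvection hij c) ∈ K) : K = ⊤ := by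
  rw [eq_top_iff]
  intro x _
  apply Subgroup.pi_mem_of_mulSingle_mem
  intro k
  have := sl_eq_top_of_transvection hn (K.comap (MonoidHom.mulSingle (fun k => SpecialLinearGroup (Fin n) (ZMod (p k))) k))
    (fun i j hij c => hK k i j hij c)
  have h2 : x k ∈ (K.comap (MonoidHom.mulSingle (fun k => SpecialLinearGroup (Fin n) (ZMod (p k))) k)) := by
    rw [this]; trivial
  exact h2

theorem slpi_perfect (hn : 2 ≤ n) (h5 : ∀ k, 5 ≤ p k) :
    commutator (∀ k, SpecialLinearGroup (Fin n) (ZMod (p k))) = ⊤ := by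
  apply slpi_eq_top p hn
  intro k i j hij c
  have h2 : (2 : ZMod (p k)) ≠ 0 := by
    intro h
    have h' : ((2:ℕ) : ZMod (p k)) = 0 := by exact_mod_cast h
    rw [ZMod.natCast_eq_zero_iff] at h'
    have := Nat.le_of_dvd (by norm_num) h'
    have := h5 k; omega
  have h3 : ((2 : ZMod (p k)) ^ 2 - 1) ≠ 0 := by
    intro h
    have h' : ((3:ℕ) : ZMod (p k)) = 0 := by push_cast; rw [← h]; ring
    rw [ZMod.natCast_eq_zero_iff] at h'
    have := Nat.le_of_dvd (by norm_num) h'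
    have := h5 k; omega
  have := sl_transvection_commutator hij 2 h2 (c / (2 ^ 2 - 1))
  rw [div_mul_cancel₀ _ h3] at this
  rw [← this]
  have e := map_commutatorElement (MonoidHom.mulSingle (fun k => SpecialLinearGroup (Fin n) (ZMod (p k))) k)
    (diag2n hij 2 h2) (SpecialLinearGroup.transvection hij (c / (2 ^ 2 - 1)))
  change Pi.mulSingle k _ = _ at e
  rw [e]
  exact Subgroup.commutator_mem_commutator (Subgroup.mem_top _) (Subgroup.mem_top _)

/-- simultaneous reduction -/
def slRed (n : ℕ) : SpecialLinearGroup (Fin n) ℤ →* (∀ k, SpecialLinearGroup (Fin n) (ZMod (p k))) :=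
  MonoidHom.pi fun k => SpecialLinearGroup.map (Int.castRingHom (ZMod (p k)))

theorem slRed_apply (g : SpecialLinearGroup (Fin n) ℤ) (k : κ) :
    slRed p n g k = SpecialLinearGroup.map (Int.castRingHom (ZMod (p k))) g := rfl

theorem slRed_range (hn : 2 ≤ n) (hinj : Function.Injective p) : (slRed p n).range = ⊤ := by
  apply slpi_eq_top p hn
  intro k i j hij c
  let m : ℕ := ∏ l ∈ Finset.univ.erase k, p l
  have hm : (m : ZMod (p k)) ≠ 0 := by
    rw [Ne, ZMod.natCast_eq_zero_iff, Prime.dvd_finsetProd_iff (hp k).out.prime]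
    rintro ⟨l, hl, hd⟩
    rw [Nat.prime_dvd_prime_iff_eq (hp k).out (hp l).out] at hd
    exact (Finset.ne_of_mem_erase hl) (hinj hd.symm)
  refine ⟨SpecialLinearGroup.transvection hij ((m : ℤ) * ((c / m : ZMod (p k)).val : ℤ)), ?_⟩
  funext l
  by_cases hl : l = k
  · subst hl
    have : (m : ZMod (p l)) * (c / m) = c := mul_div_cancel₀ _ hm
    rw [Pi.mulSingle_eq_same, slRed_apply, sl_map_transvection]
    congr 1
    simp [this]
  · have h0 : (m : ZMod (p l)) = 0 := by
      rw [ZMod.natCast_eq_zero_iff]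
      exact Finset.dvd_prod_of_mem _ (by simp [hl])
    rw [Pi.mulSingle_eq_of_ne hl, slRed_apply, sl_map_transvection]
    simp [h0]
end SLGen

end PartB

section PartE1
open Filter Topology

theorem primes_prod_small (c : ℝ) (hc : 0 < c) (p1 : ℕ) (ε : ℝ) (hε : 0 < ε) :
    ∃ P : Finset ℕ, (∀ p ∈ P, p.Prime ∧ p1 ≤ p) ∧ Real.exp (-∑ p ∈ P, c / p) < ε := by
  obtain ⟨M, hM⟩ : ∃ M : ℝ, Real.exp (-M) < ε := by
    have := (Real.tendsto_exp_neg_atTop_nhds_zero).eventually (gt_mem_nhds hε)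
    exact this.exists
  have hns := not_summable_one_div_on_primes
  set f : ℕ → ℝ := Set.indicator {p | Nat.Prime p} (fun n : ℕ => (1 : ℝ) / n) with hf
  have hf0 : ∀ n, 0 ≤ f n := fun n => Set.indicator_nonneg (fun _ _ => by positivity) n
  have hns' : ¬ Summable (fun n => f (n + p1)) := by rwa [summable_nat_add_iff]
  have ht := (not_summable_iff_tendsto_nat_atTop_of_nonneg (fun n => hf0 (n + p1))).mp hns'
  obtain ⟨N, hN⟩ := (ht.eventually_gt_atTop (M / c)).exists
  refine ⟨(Finset.Ico p1 (p1 + N)).filter Nat.Prime, ?_, ?_⟩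
  · intro p hp
    simp only [Finset.mem_filter, Finset.mem_Ico] at hp
    exact ⟨hp.2, hp.1.1⟩
  · refine lt_of_le_of_lt ?_ hM
    rw [Real.exp_le_exp, neg_le_neg_iff]
    have e : ∑ i ∈ Finset.range N, f (i + p1) = ∑ p ∈ (Finset.Ico p1 (p1 + N)).filter Nat.Prime, (1:ℝ) / p := by
      rw [Finset.sum_filter, Finset.sum_Ico_eq_sum_range]
      simp [hf, Set.indicator_apply, add_comm]
    rw [e, div_lt_iff₀ hc, Finset.sum_mul] at hN
    refine hN.le.trans (le_of_eq (Finset.sum_congr rfl fun p _ => ?_))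
    ring

open scoped Classical in
theorem words_avoid (n : ℕ) (hn : 2 ≤ n)
    (S : Finset (Matrix.SpecialLinearGroup (Fin n) ℤ))
    (hS : Subgroup.closure (S : Set (Matrix.SpecialLinearGroup (Fin n) ℤ)) = ⊤)
    (B : ∀ p : ℕ, Set (Matrix.SpecialLinearGroup (Fin n) (ZMod p))) (c : ℝ) (hc : 0 < c) (p0 : ℕ)
    (hB : ∀ p, p.Prime → p0 ≤ p →
      c / p * (Nat.card (Matrix.SpecialLinearGroup (Fin n) (ZMod p)) : ℝ) ≤ ((B p).ncard : ℝ)) :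
    Tendsto (fun L : ℕ => ((Finset.univ.filter (fun w : Fin L → {x // x ∈ S} =>
      ∀ p, p.Prime → p0 ≤ p → Matrix.SpecialLinearGroup.map (Int.castRingHom (ZMod p))
        (List.ofFn fun i => (w i : Matrix.SpecialLinearGroup (Fin n) ℤ)).prod ∉ B p)).card : ℝ) /
        ((S.card : ℝ) ^ L)) atTop (𝓝 0) := by
  rw [Metric.tendsto_atTop]
  intro ε hε
  obtain ⟨P, hP, hPε⟩ := primes_prod_small c hc (max p0 5) ε hε
  let p : {x // x ∈ P} → ℕ := fun k => k.1
  have hp : ∀ k, Fact (p k).Prime := fun k => ⟨(hP k.1 k.2).1⟩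
  have hp0 : ∀ k, p0 ≤ p k := fun k => (le_max_left _ _).trans (hP k.1 k.2).2
  have hp5 : ∀ k, 5 ≤ p k := fun k => (le_max_right _ _).trans (hP k.1 k.2).2
  have : ∀ k, Fintype (Matrix.SpecialLinearGroup (Fin n) (ZMod (p k))) := fun k => Fintype.ofFinite _
  have hSne : S.Nonempty := by
    by_contra h
    rw [Finset.not_nonempty_iff_eq_empty] at h
    subst h
    have h2 := slRed_range p hn Subtype.val_injective
    rw [MonoidHom.range_eq_map, ← hS] at h2
    have : Nontrivial (Fin n) := Fin.nontrivial_iff_two_le.mpr hn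
    obtain ⟨i, j, hij⟩ := exists_pair_ne (Fin n)
    have h3 : Matrix.SpecialLinearGroup.transvection hij (1:ℤ) ∈ (⊥ : Subgroup (Matrix.SpecialLinearGroup (Fin n) ℤ)) := by
      rw [← Subgroup.closure_empty]
      simp only [Finset.coe_empty] at hS
      rw [hS]; trivial
    rw [Subgroup.mem_bot] at h3
    have h4 := congrArg (fun A : Matrix.SpecialLinearGroup (Fin n) ℤ => (A : Matrix (Fin n) (Fin n) ℤ) i j) h3
    simp [Matrix.SpecialLinearGroup.transvection_coe, hij] at h4
  have : Nonempty {x // x ∈ S} := hSne.to_subtype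
  let s : {x // x ∈ S} → (∀ k, Matrix.SpecialLinearGroup (Fin n) (ZMod (p k))) := fun x => slRed p n x.1
  have hgen : Subgroup.closure (Set.range s) = ⊤ := by
    have : Set.range s = (slRed p n) '' (S : Set (Matrix.SpecialLinearGroup (Fin n) ℤ)) := by
      ext y; simp [s]
    rw [this, ← MonoidHom.map_closure, hS, ← MonoidHom.range_eq_map, slRed_range p hn Subtype.val_injective]
  have hperf := slpi_perfect p hn hp5
  let C : Finset (∀ k, Matrix.SpecialLinearGroup (Fin n) (ZMod (p k))) :=
    Fintype.piFinset fun k => (B (p k)).toFinsetᶜ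
  have ht := rw_equidist s hgen hperf C
  have hlim : (C.card : ℝ) / Fintype.card (∀ k, Matrix.SpecialLinearGroup (Fin n) (ZMod (p k))) < ε := by
    refine lt_of_le_of_lt ?_ hPε
    rw [Fintype.card_piFinset, Fintype.card_pi, Nat.cast_prod, Nat.cast_prod, ← Finset.prod_div_distrib,
      ← Finset.sum_neg_distrib, Real.exp_sum, ← Finset.prod_coe_sort P (fun q => Real.exp (-(c / (q:ℝ))))]
    refine Finset.prod_le_prod (fun k _ => by positivity) (fun k _ => ?_)
    have hcard : (0:ℝ) < Fintype.card (Matrix.SpecialLinearGroup (Fin n) (ZMod (p k))) := by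
      exact_mod_cast Fintype.card_pos
    have hb := hB (p k) (hp k).out (hp0 k)
    rw [Nat.card_eq_fintype_card, Set.ncard_eq_toFinset_card'] at hb
    rw [Finset.card_compl, Nat.cast_sub (Finset.card_le_univ _), div_le_iff₀ hcard]
    have h1 := Real.add_one_le_exp (-(c / (p k : ℝ)))
    have h2 := mul_le_mul_of_nonneg_right h1 hcard.le
    refine le_trans ?_ h2
    linarith
  obtain ⟨N, hN⟩ := eventually_atTop.mp (ht.eventually (gt_mem_nhds hlim))
  refine ⟨N, fun L hL => ?_⟩
  have hN' := hN L hL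
  rw [dist_zero_right, Real.norm_of_nonneg (by positivity)]
  refine lt_of_le_of_lt ?_ hN'
  rw [Fintype.card_coe]
  gcongr with w
  intro hw
  simp only [C, Fintype.mem_piFinset, Finset.mem_compl, Set.mem_toFinset]
  intro k
  have hk := hw (p k) (hp k).out (hp0 k)
  have e : (List.ofFn fun i => s (w i)).prod =
      slRed p n (List.ofFn fun i => (w i : Matrix.SpecialLinearGroup (Fin n) ℤ)).prod := by
    rw [map_list_prod, List.map_ofFn]; rfl
  rw [e, slRed_apply]
  exact hk

end PartE1

section PartC1
open Polynomial

theorem exists_companion {F : Type*} [Field F] (n : ℕ) (f : F[X]) (hf : f.Monic) (hd : f.natDegree = n) :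
    ∃ (C : Matrix (Fin n) (Fin n) F) (v : Fin n → F), C.charpoly = f ∧
      ∀ A : Matrix (Fin n) (Fin n) F, (∀ i : ℕ, A.mulVec ((C ^ i).mulVec v) = 0) → A = 0 := by
  have hpd : (AdjoinRoot.powerBasis hf.ne_zero).dim = n := by
    rw [AdjoinRoot.powerBasis_dim, hd]
  generalize hpb : AdjoinRoot.powerBasis hf.ne_zero = pb at hpd
  subst hpd
  refine ⟨Algebra.leftMulMatrix pb.basis pb.gen, pb.basis.repr 1, ?_, ?_⟩
  · rw [charpoly_leftMulMatrix, ← hpb, AdjoinRoot.minpoly_powerBasis_gen_of_monic hf]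
  · intro A hA
    have h1 : ∀ i : ℕ, ((Algebra.leftMulMatrix pb.basis pb.gen) ^ i).mulVec (pb.basis.repr 1)
        = pb.basis.repr (pb.gen ^ i) := by
      intro i
      rw [← map_pow, Algebra.leftMulMatrix_mulVec_repr, mul_one]
    ext r j
    have := hA j
    rw [h1, ← pb.basis_eq_pow, Module.Basis.repr_self, Finsupp.single_eq_pi_single, Matrix.mulVec_single_one] at this
    exact congrFun this r

theorem charpoly_count {F : Type*} [Field F] [Fintype F] (n : ℕ) (hn : 1 ≤ n) (f : F[X]) (hf : f.Monic)
    (hd : f.natDegree = n) (h0 : f.coeff 0 = (-1) ^ n) :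
    (Fintype.card F - 1) * Nat.card (Matrix.SpecialLinearGroup (Fin n) F) ≤
      Nat.card {M : Matrix.SpecialLinearGroup (Fin n) F // (M : Matrix (Fin n) (Fin n) F).charpoly = f}
        * Fintype.card F ^ n := by
  classical
  obtain ⟨C, v, hC, hcyc⟩ := exists_companion n f hf hd
  let i0 : Fin n := ⟨0, hn⟩
  have hdC : C.det = 1 := by
    rw [Matrix.det_eq_sign_charpoly_coeff, hC, h0]
    simp [← mul_pow]
  let D : Fˣ → GL (Fin n) F := fun u => Matrix.GeneralLinearGroup.mkOfDetNeZero
    (Matrix.diagonal (Function.update 1 i0 (u : F))) (by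
      rw [Matrix.det_diagonal, Finset.prod_update_of_mem (Finset.mem_univ _)]; simp)
  have hDdet : ∀ u, (D u : Matrix (Fin n) (Fin n) F).det = u := by
    intro u
    change (Matrix.diagonal (Function.update 1 i0 (u : F))).det = u
    rw [Matrix.det_diagonal, Finset.prod_update_of_mem (Finset.mem_univ _)]; simp
  let g : Fˣ × Matrix.SpecialLinearGroup (Fin n) F → GL (Fin n) F := fun x => D x.1 * (x.2 : GL (Fin n) F)
  have hgdet : ∀ x, (g x : Matrix (Fin n) (Fin n) F).det = x.1 := by
    intro x
    change ((D x.1 : Matrix (Fin n) (Fin n) F) * (x.2 : Matrix (Fin n) (Fin n) F)).det = _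
    rw [Matrix.det_mul, hDdet, x.2.2, mul_one]
  let Φ : Fˣ × Matrix.SpecialLinearGroup (Fin n) F →
      {M : Matrix.SpecialLinearGroup (Fin n) F // (M : Matrix (Fin n) (Fin n) F).charpoly = f} × (Fin n → F) :=
    fun x => (⟨⟨(g x : Matrix (Fin n) (Fin n) F) * C * ((g x)⁻¹ : GL (Fin n) F), by
        rw [Matrix.det_units_conj, hdC]⟩, by
        change ((g x : Matrix (Fin n) (Fin n) F) * C * ((g x)⁻¹ : GL (Fin n) F)).charpoly = f
        rw [Matrix.coe_units_inv, Matrix.charpoly_units_conj, hC]⟩, (g x : Matrix (Fin n) (Fin n) F).mulVec v)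
  have hΦ : Function.Injective Φ := by
    intro x y hxy
    have e1 : (g x : Matrix (Fin n) (Fin n) F) * C * ((g x)⁻¹ : GL (Fin n) F)
        = (g y : Matrix (Fin n) (Fin n) F) * C * ((g y)⁻¹ : GL (Fin n) F) := by
      have := congrArg (fun z => ((z.1.1 : Matrix.SpecialLinearGroup (Fin n) F) : Matrix (Fin n) (Fin n) F)) hxy
      exact this
    have e2 : (g x : Matrix (Fin n) (Fin n) F).mulVec v = (g y : Matrix (Fin n) (Fin n) F).mulVec v :=
      congrArg Prod.snd hxy
    have conj : ∀ z i, (g z : Matrix (Fin n) (Fin n) F) * C ^ i =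
        ((g z : Matrix (Fin n) (Fin n) F) * C * ((g z)⁻¹ : GL (Fin n) F)) ^ i * (g z : Matrix (Fin n) (Fin n) F) := by
      intro z i
      rw [Units.conj_pow, mul_assoc, Units.inv_mul, mul_one]
    have e3 : (g x : Matrix (Fin n) (Fin n) F) = g y := by
      rw [← sub_eq_zero]
      apply hcyc
      intro i
      rw [Matrix.sub_mulVec, Matrix.mulVec_mulVec, Matrix.mulVec_mulVec, conj x, conj y, e1,
        ← Matrix.mulVec_mulVec, ← Matrix.mulVec_mulVec, e2, sub_self]
    have e4 : x.1 = y.1 := by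
      apply Units.ext
      rw [← hgdet x, ← hgdet y, e3]
    have e5 : g x = g y := Units.ext e3
    have e6 : (x.2 : GL (Fin n) F) = y.2 := by
      have : D x.1 * (x.2 : GL (Fin n) F) = D y.1 * (y.2 : GL (Fin n) F) := e5
      rw [e4] at this
      exact mul_left_cancel this
    have e7 : x.2 = y.2 := by
      apply Subtype.ext
      exact congrArg Units.val e6
    exact Prod.ext e4 e7
  have := Nat.card_le_card_of_injective Φ hΦ
  rw [Nat.card_prod, Nat.card_prod, Nat.card_eq_fintype_card (α := Fˣ), Fintype.card_units] at this
  simpa using this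

theorem charpoly_count_sum {F : Type*} [Field F] [Fintype F] (n : ℕ) (hn : 1 ≤ n) (P : Finset F[X])
    (hP : ∀ f ∈ P, f.Monic ∧ f.natDegree = n ∧ f.coeff 0 = (-1) ^ n)
    (B : Set (Matrix.SpecialLinearGroup (Fin n) F))
    (hB : ∀ M : Matrix.SpecialLinearGroup (Fin n) F, (M : Matrix (Fin n) (Fin n) F).charpoly ∈ P → M ∈ B) :
    P.card * ((Fintype.card F - 1) * Nat.card (Matrix.SpecialLinearGroup (Fin n) F)) ≤
      B.ncard * Fintype.card F ^ n := by
  classical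
  have : Fintype (Matrix.SpecialLinearGroup (Fin n) F) := Fintype.ofFinite _
  have h1 : (∑ f ∈ P, Nat.card {M : Matrix.SpecialLinearGroup (Fin n) F //
      (M : Matrix (Fin n) (Fin n) F).charpoly = f}) ≤ B.ncard := by
    have : ∀ f ∈ P, Nat.card {M : Matrix.SpecialLinearGroup (Fin n) F //
      (M : Matrix (Fin n) (Fin n) F).charpoly = f} = ((B.toFinset).filter (fun M : Matrix.SpecialLinearGroup (Fin n) F => (M : Matrix (Fin n) (Fin n) F).charpoly = f)).card := by
      intro f hf
      rw [Nat.card_eq_fintype_card, Fintype.card_subtype]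
      congr 1
      ext M
      simp only [Finset.mem_filter, Finset.mem_univ, true_and, Set.mem_toFinset]
      exact ⟨fun h => ⟨hB M (h ▸ hf), h⟩, fun h => h.2⟩
    rw [Finset.sum_congr rfl this, Set.ncard_eq_toFinset_card']
    rw [← Finset.card_biUnion]
    · apply Finset.card_le_card
      intro M
      simp only [Finset.mem_biUnion, Finset.mem_filter]
      rintro ⟨f, _, h, _⟩
      exact h
    · intro a _ b _ hab
      apply Finset.disjoint_left.mpr
      intro M h1 h2
      simp only [Finset.mem_filter] at h1 h2
      exact hab (h1.2.symm.trans h2.2)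
  calc _ = ∑ f ∈ P, ((Fintype.card F - 1) * Nat.card (Matrix.SpecialLinearGroup (Fin n) F)) := by simp
    _ ≤ ∑ f ∈ P, Nat.card {M : Matrix.SpecialLinearGroup (Fin n) F // (M : Matrix (Fin n) (Fin n) F).charpoly = f}
        * Fintype.card F ^ n := Finset.sum_le_sum fun f hf =>
          charpoly_count n hn f (hP f hf).1 (hP f hf).2.1 (hP f hf).2.2
    _ ≤ _ := by rw [← Finset.sum_mul]; gcongr

end PartC1

section PartC2
open Polynomial

theorem irr_count (p : ℕ) [hp : Fact p.Prime] (hp3 : 3 ≤ p) (m : ℕ) (hm : m ≠ 0) :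
    ∃ I : Finset (ZMod p)[X], (∀ g ∈ I, g.Monic ∧ Irreducible g ∧ g.natDegree = m) ∧
      p ^ m ≤ 2 * m * I.card := by
  classical
  have : Fintype (GaloisField p m) := Fintype.ofFinite _
  have hcard : Fintype.card (GaloisField p m) = p ^ m := by
    rw [← Nat.card_eq_fintype_card, GaloisField.card p m hm]
  have hint : ∀ x : GaloisField p m, IsIntegral (ZMod p) x := fun x => Algebra.IsIntegral.isIntegral x
  let s : Finset (GaloisField p m) := Finset.univ.filter fun x => (minpoly (ZMod p) x).natDegree = m
  refine ⟨s.image (minpoly (ZMod p)), ?_, ?_⟩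
  · intro g hg
    obtain ⟨x, hx, rfl⟩ := Finset.mem_image.mp hg
    exact ⟨minpoly.monic (hint x), minpoly.irreducible (hint x), (Finset.mem_filter.mp hx).2⟩
  have h1 : s.card ≤ m * (s.image (minpoly (ZMod p))).card := by
    apply Finset.card_le_mul_card_image
    intro b hb
    obtain ⟨y, hy, rfl⟩ := Finset.mem_image.mp hb
    have hy2 : (minpoly (ZMod p) y).natDegree = m := (Finset.mem_filter.mp hy).2
    calc _ ≤ ((minpoly (ZMod p) y).map (algebraMap (ZMod p) (GaloisField p m))).roots.toFinset.card := by
          apply Finset.card_le_card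
          intro x hx
          rw [Multiset.mem_toFinset, mem_roots', IsRoot.def, eval_map_algebraMap]
          refine ⟨?_, ?_⟩
          · exact (Polynomial.Monic.map _ (minpoly.monic (hint y))).ne_zero
          · rw [← (Finset.mem_filter.mp hx).2, minpoly.aeval]
      _ ≤ _ := Multiset.toFinset_card_le _
      _ ≤ _ := card_roots' _
      _ = m := by rw [natDegree_map, hy2]
  have h2 : (Finset.univ.filter fun x : GaloisField p m => ¬ (minpoly (ZMod p) x).natDegree = m).card ≤
      ∑ d ∈ Finset.range m, p ^ d := by
    calc _ ≤ ((Finset.range m).biUnion fun d => Finset.univ.filter fun x : GaloisField p m =>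
            (minpoly (ZMod p) x).natDegree = d).card := by
          apply Finset.card_le_card
          intro x hx
          have h3 := (Finset.mem_filter.mp hx).2
          have h4 := minpoly.natDegree_le (A := ZMod p) x
          rw [GaloisField.finrank p hm] at h4
          simp only [Finset.mem_biUnion, Finset.mem_range, Finset.mem_filter, Finset.mem_univ, true_and]
          exact ⟨_, by omega, rfl⟩
      _ ≤ ∑ d ∈ Finset.range m, (Finset.univ.filter fun x : GaloisField p m =>
            (minpoly (ZMod p) x).natDegree = d).card := Finset.card_biUnion_le
      _ ≤ _ := by
          apply Finset.sum_le_sum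
          intro d hd
          by_cases hd0 : d = 0
          · subst hd0
            rw [Finset.card_eq_zero.mpr]
            · simp
            · ext x
              simp only [Finset.mem_filter, Finset.mem_univ, true_and, Finset.notMem_empty, iff_false]
              exact (minpoly.natDegree_pos (hint x)).ne'
          have hnd := FiniteField.X_pow_card_pow_sub_X_natDegree_eq (GaloisField p m) hd0 hp.out.one_lt
          calc _ ≤ ((X ^ p ^ d - X : (GaloisField p m)[X])).roots.toFinset.card := by
                apply Finset.card_le_card
                intro x hx
                have hx := (Finset.mem_filter.mp hx).2
                rw [Multiset.mem_toFinset, mem_roots']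
                refine ⟨FiniteField.X_pow_card_pow_sub_X_ne_zero _ hd0 hp.out.one_lt, ?_⟩
                have hfr := IntermediateField.adjoin.finrank (hint x)
                rw [hx] at hfr
                have : Fintype (IntermediateField.adjoin (ZMod p) {x}) := Fintype.ofFinite _
                have hc := FiniteField.pow_finrank_eq_card p (IntermediateField.adjoin (ZMod p) {x})
                rw [hfr] at hc
                have hpc := FiniteField.pow_card (IntermediateField.AdjoinSimple.gen (ZMod p) x)
                rw [← hc] at hpc
                have hpc := congrArg Subtype.val hpc
                simp only [IsRoot.def, eval_sub, eval_pow, eval_X]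
                rw [sub_eq_zero]
                simpa using hpc
            _ ≤ _ := Multiset.toFinset_card_le _
            _ ≤ _ := card_roots' _
            _ = p ^ d := hnd
  have h3 : s.card + (Finset.univ.filter fun x : GaloisField p m => ¬ (minpoly (ZMod p) x).natDegree = m).card
      = p ^ m := by
    rw [← hcard, Finset.card_filter_add_card_filter_not, Finset.card_univ]
  have h4 : (∑ d ∈ Finset.range m, p ^ d) * 2 ≤ p ^ m := by
    have := Nat.geomSum_eq (m := p) (by omega) m
    rw [this]
    calc (p ^ m - 1) / (p - 1) * 2 ≤ (p ^ m - 1) / (p - 1) * (p - 1) := by gcongr; omega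
      _ ≤ p ^ m - 1 := Nat.div_mul_le_self _ _
      _ ≤ _ := Nat.sub_le _ _
  nlinarith

/-- type 1 -/
def T1 {F : Type*} [Field F] (n : ℕ) (f : F[X]) : Prop :=
  ∃ (a : F) (g : F[X]), g.Monic ∧ Irreducible g ∧ g.natDegree = n - 1 ∧ f = (X - C a) * g

theorem T1_count (p : ℕ) [hp : Fact p.Prime] (hp3 : 3 ≤ p) (n : ℕ) (hn : 3 ≤ n) :
    ∃ P : Finset (ZMod p)[X], (∀ f ∈ P, (f.Monic ∧ f.natDegree = n ∧ f.coeff 0 = (-1) ^ n) ∧ T1 n f) ∧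
      p ^ (n-1) ≤ 2 * (n-1) * P.card := by
  classical
  obtain ⟨I, hI, hc⟩ := irr_count p hp3 (n-1) (by omega)
  let φ : (ZMod p)[X] → (ZMod p)[X] := fun g => (X - C (-((-1)^n * (g.coeff 0)⁻¹))) * g
  refine ⟨I.image φ, ?_, ?_⟩
  · intro f hf
    obtain ⟨g, hg, rfl⟩ := Finset.mem_image.mp hf
    obtain ⟨h1, h2, h3⟩ := hI g hg
    have hg0 : g.coeff 0 ≠ 0 := by
      intro h0
      have : X ∣ g := X_dvd_iff.mpr h0
      have := (Irreducible.associated_of_dvd irreducible_X h2 this)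
      have := degree_eq_degree_of_associated this
      rw [degree_X, degree_eq_natDegree h1.ne_zero, h3] at this
      have : n - 1 = 1 := by exact_mod_cast this.symm
      omega
    refine ⟨⟨(monic_X_sub_C _).mul h1, ?_, ?_⟩, _, g, h1, h2, h3, rfl⟩
    · simp only [φ]
      rw [(monic_X_sub_C _).natDegree_mul h1, natDegree_X_sub_C, h3]; omega
    · simp only [φ, mul_coeff_zero, coeff_sub, coeff_X_zero, coeff_C_zero]
      field_simp
      ring
  · rw [Finset.card_image_of_injOn]
    · exact hc
    intro g hg g' hg' h
    obtain ⟨h1, h2, h3⟩ := hI g hg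
    obtain ⟨h1', h2', h3'⟩ := hI g' hg'
    simp only [φ] at h
    have hd : g ∣ (X - C (-((-1)^n * (g'.coeff 0)⁻¹))) * g' := ⟨_, by rw [← h, mul_comm]⟩
    rcases h2.prime.dvd_or_dvd hd with hd | hd
    · have := natDegree_le_of_dvd hd (X_sub_C_ne_zero _)
      rw [natDegree_X_sub_C, h3] at this
      omega
    · exact eq_of_monic_of_associated h1 h1' (h2.associated_of_dvd h2' hd)

end PartC2

section PartC3
open Polynomial

/-- type 2 -/
def T2 {F : Type*} [Field F] (f : F[X]) : Prop :=
  ∃ (A : Finset F) (Q : F[X]), (1 : F) ∉ A ∧ (-1 : F) ∉ A ∧ Q.Monic ∧ Irreducible Q ∧ Q.natDegree = 2 ∧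
    f = (∏ a ∈ A, (X - C a)) * Q

theorem exists_irr_quad (p : ℕ) [hp : Fact p.Prime] (hp3 : 3 ≤ p) (s : ZMod p) (hs : s ≠ 0) :
    ∃ Q : (ZMod p)[X], Q.Monic ∧ Irreducible Q ∧ Q.natDegree = 2 ∧ Q.coeff 0 = s := by
  have h2 : (2 : ZMod p) ≠ 0 := by
    intro h
    have : ((2 : ℕ) : ZMod p) = 0 := by exact_mod_cast h
    rw [ZMod.natCast_eq_zero_iff] at this
    have := Nat.le_of_dvd (by norm_num) this
    omega
  have key : ∃ t : ZMod p, ¬ IsSquare (t ^ 2 - 4 * s) := by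
    by_contra! hcon
    have h4s : (4 * s : ZMod p) ≠ 0 := by
      have : (4 : ZMod p) = 2 * 2 := by norm_num
      rw [this]
      exact mul_ne_zero (mul_ne_zero h2 h2) hs
    have hk : ∀ k : ℕ, IsSquare (-(k * (4 * s)) : ZMod p) := by
      intro k
      induction k with
      | zero => simp
      | succ k ih =>
        obtain ⟨r, hr⟩ := ih
        have := hcon r
        rw [pow_two, ← hr] at this
        convert this using 1
        push_cast; ring
    obtain ⟨x, hx⟩ := FiniteField.exists_nonsquare (F := ZMod p) (by
      rw [ZMod.ringChar_zmod_n]; omega)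
    apply hx
    have := hk ((-x / (4 * s)).val)
    rw [ZMod.natCast_zmod_val, div_mul_cancel₀ _ h4s, neg_neg] at this
    exact this
  obtain ⟨t, ht⟩ := key
  have e : (X ^ 2 - C t * X + C s : (ZMod p)[X]) = C 1 * X ^ 2 + C (-t) * X + C s := by
    simp [sub_eq_add_neg]
  have hnd : (X ^ 2 - C t * X + C s : (ZMod p)[X]).natDegree = 2 := by
    rw [e]; exact natDegree_quadratic one_ne_zero
  have hm : (X ^ 2 - C t * X + C s : (ZMod p)[X]).Monic := by
    rw [Monic, leadingCoeff, hnd]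
    rw [e]; simp [coeff_X, coeff_C]
  refine ⟨X ^ 2 - C t * X + C s, hm, ?_, hnd, by simp⟩
  rw [hm.irreducible_iff_roots_eq_zero_of_degree_le_three (by omega) (by omega)]
  rw [Multiset.eq_zero_iff_forall_notMem]
  intro x hx
  rw [mem_roots', IsRoot.def] at hx
  have := hx.2
  simp only [eval_add, eval_sub, eval_pow, eval_X, eval_mul, eval_C] at this
  exact ht ⟨2 * x - t, by linear_combination -4 * this⟩

theorem T2_count (p : ℕ) [hp : Fact p.Prime] (hp3 : 3 ≤ p) (n : ℕ) (hn : 2 ≤ n) :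
    ∃ P : Finset (ZMod p)[X], (∀ f ∈ P, (f.Monic ∧ f.natDegree = n ∧ f.coeff 0 = (-1) ^ n) ∧ T2 f) ∧
      (p - 3).choose (n - 2) ≤ P.card := by
  classical
  let U : Finset (ZMod p) := Finset.univ \ {0, 1, -1}
  have hU : p - 3 ≤ U.card := by
    have h1 := Finset.le_card_sdiff ({0, 1, -1} : Finset (ZMod p)) Finset.univ
    rw [Finset.card_univ, ZMod.card] at h1
    have h2 : ({0, 1, -1} : Finset (ZMod p)).card ≤ 3 := Finset.card_le_three
    simp only [U]
    omega
  have hs : ∀ A ∈ U.powersetCard (n - 2), (∏ a ∈ A, a)⁻¹ ≠ (0 : ZMod p) := by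
    intro A hA
    rw [Finset.mem_powersetCard] at hA
    apply inv_ne_zero
    rw [Finset.prod_ne_zero_iff]
    intro a ha
    have := hA.1 ha
    simp only [U, Finset.mem_sdiff, Finset.mem_insert, not_or] at this
    exact this.2.1
  have hQ : ∀ A : Finset (ZMod p), ∃ Q : (ZMod p)[X], A ∈ U.powersetCard (n - 2) →
      (Q.Monic ∧ Irreducible Q ∧ Q.natDegree = 2 ∧ Q.coeff 0 = (∏ a ∈ A, a)⁻¹) := by
    intro A
    by_cases hA : A ∈ U.powersetCard (n - 2)
    · obtain ⟨Q, h⟩ := exists_irr_quad p hp3 _ (hs A hA)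
      exact ⟨Q, fun _ => h⟩
    · exact ⟨0, fun h => absurd h hA⟩
  choose Q hQ using hQ
  refine ⟨(U.powersetCard (n - 2)).image fun A => (∏ a ∈ A, (X - C a)) * Q A, ?_, ?_⟩
  · intro f hf
    obtain ⟨A, hA, rfl⟩ := Finset.mem_image.mp hf
    obtain ⟨h1, h2, h3, h4⟩ := hQ A hA
    have hA' := Finset.mem_powersetCard.mp hA
    have hm : (∏ a ∈ A, (X - C a)).Monic := monic_prod_of_monic _ _ fun a _ => monic_X_sub_C a
    refine ⟨⟨hm.mul h1, ?_, ?_⟩, A, Q A, ?_, ?_, h1, h2, h3, rfl⟩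
    · rw [hm.natDegree_mul h1, h3, natDegree_prod_of_monic _ _ fun a _ => monic_X_sub_C a]
      simp [hA'.2]; omega
    · rw [mul_coeff_zero, h4, coeff_zero_prod]
      simp only [coeff_sub, coeff_X_zero, coeff_C_zero, zero_sub]
      rw [Finset.prod_neg, hA'.2, mul_assoc, mul_inv_cancel₀ (fun h => hs A hA (by rw [h, inv_zero])), mul_one]
      obtain ⟨k, rfl⟩ := Nat.exists_eq_add_of_le hn
      simp [pow_add]
    · intro h; have := hA'.1 h; simp [U] at this
    · intro h; have := hA'.1 h; simp [U] at this
  · rw [Finset.card_image_of_injOn, Finset.card_powersetCard]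
    · exact Nat.choose_le_choose _ hU
    have hroots : ∀ A ∈ U.powersetCard (n - 2), ((∏ a ∈ A, (X - C a)) * Q A).roots = A.val := by
      intro A hA
      obtain ⟨h1, h2, h3, h4⟩ := hQ A hA
      have hm : (∏ a ∈ A, (X - C a)).Monic := monic_prod_of_monic _ _ fun a _ => monic_X_sub_C a
      rw [roots_mul (hm.mul h1).ne_zero, roots_prod_X_sub_C,
        (h1.irreducible_iff_roots_eq_zero_of_degree_le_three (by omega) (by omega)).mp h2, add_zero]
    intro A hA A' hA' h
    have h := congrArg roots h
    simp only at h
    rw [hroots A hA, hroots A' hA'] at h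
    exact Finset.val_injective h

end PartC3

section PartC4
open Polynomial

theorem dens_aux (n : ℕ) (hn : 2 ≤ n) (c : ℝ) (hc : 0 < c) (p : ℕ) [hp : Fact p.Prime]
    (P : Finset (ZMod p)[X])
    (hP : ∀ f ∈ P, f.Monic ∧ f.natDegree = n ∧ f.coeff 0 = (-1) ^ n)
    (B : Set (Matrix.SpecialLinearGroup (Fin n) (ZMod p)))
    (hB : ∀ M : Matrix.SpecialLinearGroup (Fin n) (ZMod p), (M : Matrix (Fin n) (Fin n) (ZMod p)).charpoly ∈ P → M ∈ B)
    (hcP : c * (p : ℝ) ^ (n - 2) ≤ P.card) :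
    c / 2 / p * (Nat.card (Matrix.SpecialLinearGroup (Fin n) (ZMod p)) : ℝ) ≤ (B.ncard : ℝ) := by
  have h := charpoly_count_sum n (by omega) P hP B hB
  rw [ZMod.card] at h
  have h2 := hp.out.two_le
  set N := Nat.card (Matrix.SpecialLinearGroup (Fin n) (ZMod p))
  have h' : (P.card : ℝ) * (((p : ℝ) - 1) * N) ≤ B.ncard * (p : ℝ) ^ n := by
    have h3 : ((P.card * ((p - 1) * N) : ℕ) : ℝ) ≤ ((B.ncard * p ^ n : ℕ) : ℝ) := by exact_mod_cast h
    push_cast [Nat.cast_sub (by omega : 1 ≤ p)] at h3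
    exact h3
  have hp2 : (2 : ℝ) ≤ p := by exact_mod_cast h2
  have hpos : (0 : ℝ) < p := by linarith
  have h4 : c * (p : ℝ) ^ (n - 2) * ((p : ℝ) / 2 * N) ≤ B.ncard * (p : ℝ) ^ n := by
    refine le_trans ?_ h'
    gcongr
    linarith
  obtain ⟨k, rfl⟩ := Nat.exists_eq_add_of_le hn
  rw [show 2 + k - 2 = k by omega] at h4
  have hpk : (0 : ℝ) < (p : ℝ) ^ k := by positivity
  have h5 : c / 2 * N ≤ B.ncard * p := by
    have e1 : c * (p : ℝ) ^ k * ((p : ℝ) / 2 * N) = (c / 2 * N) * (p ^ k * p) := by ring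
    have e2 : (B.ncard : ℝ) * (p : ℝ) ^ (2 + k) = (B.ncard * p) * (p ^ k * p) := by ring
    rw [e1, e2] at h4
    exact le_of_mul_le_mul_right h4 (by positivity)
  rw [div_mul_eq_mul_div, div_le_iff₀ hpos]
  exact h5

theorem T1_dens (n : ℕ) (hn : 2 ≤ n) : ∃ c : ℝ, 0 < c ∧ ∀ p : ℕ, p.Prime → 2 * n + 1 ≤ p →
    c / p * (Nat.card (Matrix.SpecialLinearGroup (Fin n) (ZMod p)) : ℝ) ≤
     (({M | ∀ _ : Fact p.Prime, n ≤ 2 ∨ T1 n (M : Matrix (Fin n) (Fin n) (ZMod p)).charpoly} :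
        Set (Matrix.SpecialLinearGroup (Fin n) (ZMod p))).ncard : ℝ) := by
  have hn0 : (0 : ℝ) < (n - 1 : ℕ) := by exact_mod_cast (by omega : 0 < n - 1)
  by_cases hn3 : n ≤ 2
  · refine ⟨1, one_pos, fun p hp _ => ?_⟩
    simp only [hn3, true_or, implies_true, Set.setOf_true, Set.ncard_univ]
    have : (1 : ℝ) / p ≤ 1 := by
      rw [div_le_one (by exact_mod_cast hp.pos)]; exact_mod_cast hp.one_lt.le
    nlinarith [Nat.cast_nonneg (α := ℝ) (Nat.card (Matrix.SpecialLinearGroup (Fin n) (ZMod p)))]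
  · refine ⟨1 / (2 * (n - 1 : ℕ)) / 2, by positivity, fun p hp hpn => ?_⟩
    have := Fact.mk hp
    obtain ⟨P, hP, hc⟩ := T1_count p (by omega) n (by omega)
    refine dens_aux n hn _ (by positivity) p P (fun f hf => (hP f hf).1) _ ?_ ?_
    · intro M hM
      intro _
      exact Or.inr (hP _ hM).2
    · have hc' : (p : ℝ) ^ (n - 1) ≤ 2 * (n - 1 : ℕ) * P.card := by exact_mod_cast hc
      rw [div_mul_eq_mul_div, one_mul, div_le_iff₀ (by positivity), mul_comm (P.card : ℝ)]
      refine le_trans ?_ hc'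
      exact pow_le_pow_right₀ (by exact_mod_cast hp.one_lt.le) (by omega)

theorem T2_dens (n : ℕ) (hn : 2 ≤ n) : ∃ c : ℝ, 0 < c ∧ ∀ p : ℕ, p.Prime → 2 * n + 1 ≤ p →
    c / p * (Nat.card (Matrix.SpecialLinearGroup (Fin n) (ZMod p)) : ℝ) ≤
     (({M | ∀ _ : Fact p.Prime, T2 (M : Matrix (Fin n) (Fin n) (ZMod p)).charpoly} :
        Set (Matrix.SpecialLinearGroup (Fin n) (ZMod p))).ncard : ℝ) := by
  refine ⟨1 / (2 ^ (n - 2) * (n - 2).factorial) / 2, by positivity, fun p hp hpn => ?_⟩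
  have := Fact.mk hp
  obtain ⟨P, hP, hc⟩ := T2_count p (by omega) n hn
  refine dens_aux n hn _ (by positivity) p P (fun f hf => (hP f hf).1) _ ?_ ?_
  · intro M hM _
    exact (hP _ hM).2
  · have hc' : ((p - 3).choose (n - 2) : ℝ) ≤ P.card := by exact_mod_cast hc
    refine le_trans ?_ hc'
    refine le_trans ?_ (Nat.pow_le_choose (n - 2) (p - 3))
    rw [div_mul_eq_mul_div, one_mul, ← div_div, ← div_pow]
    gcongr
    rw [div_le_iff₀ (by norm_num)]
    have : p ≤ (p - 3 + 1 - (n - 2)) * 2 := by omega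
    exact_mod_cast this

end PartC4

section PartD1
open Polynomial

theorem no_root_of_irr {F : Type*} [Field F] {Q : F[X]} (hQ : Irreducible Q) (h2 : 2 ≤ Q.natDegree) (x : F) :
    Q.eval x ≠ 0 := by
  intro h
  have h3 : Q.natDegree = 1 := natDegree_eq_of_degree_eq_some (degree_eq_one_of_irreducible_of_root hQ h)
  omega

theorem f_irreducible (n : ℕ) (hn : 2 ≤ n) (f : ℤ[X]) (hf : f.Monic) (hd : f.natDegree = n)
    (h0 : IsUnit (f.coeff 0))
    (h1 : n ≤ 2 ∨ ∃ p : ℕ, ∃ _ : Fact p.Prime, T1 n (f.map (Int.castRingHom (ZMod p))))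
    (h2 : ∃ p : ℕ, ∃ _ : Fact p.Prime, T2 (f.map (Int.castRingHom (ZMod p)))) : Irreducible f := by
  obtain ⟨p', hp', A, Q, hA1, hA2, hQm, hQi, hQd, hfQ⟩ := h2
  have hmA : (∏ a ∈ A, (X - C a)).Monic := monic_prod_of_monic _ _ fun a _ => monic_X_sub_C a
  rcases h1 with h1 | h1
  · have hA : A = ∅ := by
      have := congrArg natDegree hfQ
      rw [hmA.natDegree_mul hQm, hQd, hf.natDegree_map, hd,
        natDegree_prod_of_monic _ _ fun a _ => monic_X_sub_C a] at this
      simp at this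
      rw [← Finset.card_eq_zero]; omega
    apply hf.irreducible_of_irreducible_map (Int.castRingHom (ZMod p'))
    rw [hfQ, hA]; simpa using hQi
  by_cases hn2 : n ≤ 2
  · have hA : A = ∅ := by
      have := congrArg natDegree hfQ
      rw [hmA.natDegree_mul hQm, hQd, hf.natDegree_map, hd,
        natDegree_prod_of_monic _ _ fun a _ => monic_X_sub_C a] at this
      simp at this
      rw [← Finset.card_eq_zero]; omega
    apply hf.irreducible_of_irreducible_map (Int.castRingHom (ZMod p'))
    rw [hfQ, hA]; simpa using hQi
  obtain ⟨p, hp, a, g, hgm, hgi, hgd, hfg⟩ := h1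
  rw [hf.irreducible_iff_natDegree']
  refine ⟨?_, ?_⟩
  · rintro rfl; simp at hd; omega
  intro u v hu hv huv hmem
  rw [Finset.mem_Ioc, hd] at hmem
  have hdeg : u.natDegree + v.natDegree = n := by rw [← hu.natDegree_mul hv, huv, hd]
  have hdv : g ∣ u.map (Int.castRingHom (ZMod p)) * v.map (Int.castRingHom (ZMod p)) := by
    rw [← Polynomial.map_mul, huv, hfg]; exact dvd_mul_left _ _
  have hv1 : v.natDegree = 1 := by
    rcases hgi.prime.dvd_or_dvd hdv with h | h
    · have := natDegree_le_of_dvd h (hu.map _).ne_zero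
      rw [hu.natDegree_map, hgd] at this
      omega
    · have := natDegree_le_of_dvd h (hv.map _).ne_zero
      rw [hv.natDegree_map, hgd] at this
      omega
  have hvX : v = X + C (v.coeff 0) := by
    exact hv.eq_X_add_C hv1
  have hc : IsUnit (v.coeff 0) := by
    rw [← huv, mul_coeff_zero] at h0
    exact isUnit_of_mul_isUnit_right h0
  have hroot : f.eval (-(v.coeff 0)) = 0 := by
    rw [← huv, eval_mul]
    have : v.eval (-(v.coeff 0)) = 0 := by
      conv_lhs => rw [hvX]
      simp
    rw [this, mul_zero]
  have hroot' : (f.map (Int.castRingHom (ZMod p'))).eval ((-(v.coeff 0) : ℤ) : ZMod p') = 0 := by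
    have := eval_map_apply (Int.castRingHom (ZMod p')) (-(v.coeff 0)) (p := f)
    rw [hroot] at this
    simpa using this
  rw [hfQ, eval_mul, mul_eq_zero] at hroot'
  rcases hroot' with h | h
  · rw [eval_prod, Finset.prod_eq_zero_iff] at h
    obtain ⟨b, hb, h⟩ := h
    simp only [eval_sub, eval_X, eval_C] at h
    rw [sub_eq_zero] at h
    rcases Int.isUnit_iff.mp hc with h3 | h3
    · rw [h3] at h; simp at h; rw [← h] at hb; exact hA2 hb
    · rw [h3] at h; simp at h; rw [← h] at hb; exact hA1 hb
  · exact no_root_of_irr hQi hQd.ge _ h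

end PartD1

section PartD2
open Polynomial

theorem hensel_root (p : ℕ) [hp : Fact p.Prime] (F : ℤ_[p][X]) (a : ZMod p)
    (h0 : (F.map PadicInt.toZMod).eval a = 0) (h1 : (F.map PadicInt.toZMod).derivative.eval a ≠ 0) :
    ∃ z : ℤ_[p], F.eval z = 0 ∧ PadicInt.toZMod z = a := by
  have hk : ∀ x : ℤ_[p], PadicInt.toZMod x = 0 ↔ ‖x‖ < 1 := by
    intro x
    rw [← RingHom.mem_ker, PadicInt.ker_toZMod, IsLocalRing.mem_maximalIdeal, PadicInt.mem_nonunits]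
  obtain ⟨b, rfl⟩ := ZMod.ringHom_surjective (PadicInt.toZMod (p := p)) a
  rw [eval_map_apply, hk] at h0
  rw [derivative_map, eval_map_apply, Ne, hk] at h1
  have h1' : ‖F.derivative.eval b‖ = 1 := le_antisymm (PadicInt.norm_le_one _) (not_lt.mp h1)
  obtain ⟨z, hz, hza, -, -⟩ := hensels_lemma (p := p) (F := F) (a := b) (by
    rw [coe_aeval_eq_eval, h1']; simpa using h0)
  rw [coe_aeval_eq_eval, h1'] at hza
  rw [coe_aeval_eq_eval] at hz
  refine ⟨z, hz, ?_⟩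
  rw [← sub_eq_zero, ← map_sub, hk]
  exact hza

theorem hensel_factor (p : ℕ) [hp : Fact p.Prime] (Q : (ZMod p)[X]) (hQm : Q.Monic)
    (hQ : ∀ x, Q.eval x ≠ 0) (A : Finset (ZMod p)) :
    ∀ F : ℤ_[p][X], F.Monic → F.map PadicInt.toZMod = (∏ a ∈ A, (X - C a)) * Q →
    ∃ (s : Multiset ℤ_[p]) (H : ℤ_[p][X]), s.card = A.card ∧ H.Monic ∧ H.map PadicInt.toZMod = Q ∧
      F = (s.map (fun a => X - C a)).prod * H := by
  classical
  induction A using Finset.induction_on with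
  | empty =>
    intro F hF h
    exact ⟨0, F, by simp, hF, by simpa using h, by simp⟩
  | insert a A ha ih =>
    intro F hF h
    rw [Finset.prod_insert ha, mul_assoc] at h
    obtain ⟨z, hz, hza⟩ := hensel_root p F a (by rw [h]; simp) (by
      rw [h, derivative_mul]
      simp only [derivative_sub, derivative_X, derivative_C, sub_zero, one_mul, eval_add, eval_mul, eval_sub,
        eval_X, eval_C, sub_self, zero_mul, add_zero, eval_prod]
      refine mul_ne_zero (Finset.prod_ne_zero_iff.mpr ?_) (hQ a)
      intro b hb hab
      rw [sub_eq_zero] at hab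
      exact ha (hab ▸ hb))
    obtain ⟨F1, hF1⟩ := dvd_iff_isRoot.mpr hz
    have hm1 : F1.Monic := (monic_X_sub_C z).of_mul_monic_left (hF1 ▸ hF)
    have h2 : F1.map PadicInt.toZMod = (∏ a ∈ A, (X - C a)) * Q := by
      rw [hF1, Polynomial.map_mul, Polynomial.map_sub, map_X, map_C, hza] at h
      exact mul_left_cancel₀ (X_sub_C_ne_zero a) h
    obtain ⟨s, H, hs, hH, hHQ, hFH⟩ := ih F1 hm1 h2
    refine ⟨z ::ₘ s, H, by simp [hs, ha], hH, hHQ, ?_⟩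
    rw [hF1, hFH, Multiset.map_cons, Multiset.prod_cons, mul_assoc]

theorem padic_factor (p : ℕ) [hp : Fact p.Prime] (f : ℤ[X]) (hf : f.Monic) (Q : (ZMod p)[X]) (hQm : Q.Monic)
    (hQi : Irreducible Q) (hQd : 2 ≤ Q.natDegree) (A : Finset (ZMod p))
    (h : f.map (Int.castRingHom (ZMod p)) = (∏ a ∈ A, (X - C a)) * Q) :
    ∃ (s : Multiset ℚ_[p]) (H : ℚ_[p][X]), s.card = A.card ∧ H.Monic ∧ Irreducible H ∧
      H.natDegree = Q.natDegree ∧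
      (f.map (algebraMap ℤ ℚ)).map (algebraMap ℚ ℚ_[p]) = (s.map (fun a => X - C a)).prod * H := by
  obtain ⟨s, H, hs, hH, hHQ, hFH⟩ := hensel_factor p Q hQm (no_root_of_irr hQi hQd) A
    (f.map (Int.castRingHom ℤ_[p])) (hf.map _) (by
      rw [Polynomial.map_map, ← h]; congr 1; exact RingHom.ext_int _ _)
  have hHi : Irreducible H := hH.irreducible_of_irreducible_map PadicInt.toZMod H (hHQ ▸ hQi)
  refine ⟨s.map (algebraMap ℤ_[p] ℚ_[p]), H.map (algebraMap ℤ_[p] ℚ_[p]), by simpa using hs, hH.map _,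
    hH.irreducible_iff_irreducible_map_fraction_map.mp hHi, ?_, ?_⟩
  · rw [hH.natDegree_map, ← hHQ, hH.natDegree_map]
  · have := congrArg (Polynomial.map (algebraMap ℤ_[p] ℚ_[p])) hFH
    rw [Polynomial.map_map, Polynomial.map_mul, Polynomial.map_multiset_prod, Multiset.map_map] at this
    rw [Polynomial.map_map, Multiset.map_map]
    convert this using 1
    · congr 1
    · congr 2
      apply Multiset.map_congr rfl
      intro x _
      simp

end PartD2

section PartD3
open Polynomial

section
variable {K : Type*} [Field K] [Algebra ℚ K] {E : Type*} [Field E] [Algebra ℚ E] [Algebra K E]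
  [IsScalarTower ℚ K E] [Normal K E]

theorem root_cases (q : ℚ[X]) (s : Multiset K) (H : K[X])
    (hq : q.map (algebraMap ℚ K) = (s.map (fun a => X - C a)).prod * H) (x : E) (hx : aeval x q = 0) :
    (∃ a ∈ s, x = algebraMap K E a) ∨ aeval x H = 0 := by
  have : aeval x (q.map (algebraMap ℚ K)) = 0 := by rw [aeval_map_algebraMap, hx]
  rw [hq, map_mul, mul_eq_zero] at this
  refine this.imp (fun h => ?_) id
  rw [map_multiset_prod, Multiset.prod_eq_zero_iff, Multiset.mem_map] at h
  obtain ⟨y, hy, h⟩ := h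
  obtain ⟨a, ha, rfl⟩ := Multiset.mem_map.mp hy
  rw [map_sub, aeval_X, aeval_C, sub_eq_zero] at h
  exact ⟨a, ha, h⟩

theorem exists_conj (H : K[X]) (hm : H.Monic) (hi : Irreducible H) (x y : E) (hx : aeval x H = 0)
    (hy : aeval y H = 0) : ∃ σ : E ≃ₐ[K] E, σ x = y := by
  have : IsConjRoot K y x := by
    rw [IsConjRoot, ← minpoly.eq_of_irreducible_of_monic hi hx hm, ← minpoly.eq_of_irreducible_of_monic hi hy hm]
  exact isConjRoot_iff_exists_algEquiv.mp this

theorem smul_restrict (q : ℚ[X]) [Fact (q.map (algebraMap ℚ E)).Splits] (σ : E ≃ₐ[K] E) (x : q.rootSet E) :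
    ((Gal.restrict q E (σ.restrictScalars ℚ) • x : q.rootSet E) : E) = σ x :=
  Gal.galActionHom_restrict q E (σ.restrictScalars ℚ) x

theorem stab_trans (q : ℚ[X]) (hq0 : q ≠ 0) [Fact (q.map (algebraMap ℚ E)).Splits] (α : K) (H : K[X])
    (hm : H.Monic) (hi : Irreducible H)
    (hq : q.map (algebraMap ℚ K) = (({α} : Multiset K).map (fun a => X - C a)).prod * H) :
    ∃ a : q.rootSet E, ∀ b c : q.rootSet E, b ≠ a → c ≠ a → ∃ g : q.Gal, g • a = a ∧ g • b = c := by
  have ha : algebraMap K E α ∈ q.rootSet E := by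
    rw [mem_rootSet]
    refine ⟨hq0, ?_⟩
    rw [← aeval_map_algebraMap K, hq]
    simp
  refine ⟨⟨_, ha⟩, ?_⟩
  intro b c hb hc
  have key : ∀ b : q.rootSet E, b ≠ ⟨_, ha⟩ → aeval (b : E) H = 0 := by
    intro b hb
    rcases root_cases q {α} H hq (b : E) (mem_rootSet.mp b.2).2 with h | h
    · obtain ⟨a, h1, h2⟩ := h
      rw [Multiset.mem_singleton] at h1
      subst h1
      exact absurd (Subtype.ext h2) hb
    · exact h
  obtain ⟨σ, hσ⟩ := exists_conj H hm hi (b : E) c (key b hb) (key c hc)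
  refine ⟨Gal.restrict q E (σ.restrictScalars ℚ), ?_, ?_⟩
  · apply Subtype.ext
    rw [smul_restrict]
    simp
  · apply Subtype.ext
    rw [smul_restrict, hσ]

open scoped Classical in
theorem swap_exists (q : ℚ[X]) (hq0 : q ≠ 0) [Fact (q.map (algebraMap ℚ E)).Splits] (s : Multiset K) (H : K[X])
    (hm : H.Monic) (hi : Irreducible H) (hd : H.natDegree = 2) (hs : H.Separable)
    (hHs : (H.map (algebraMap K E)).Splits)
    (hq : q.map (algebraMap ℚ K) = (s.map (fun a => X - C a)).prod * H) :
    ∃ g : q.Gal, ∃ x y : q.rootSet E, x ≠ y ∧ ∀ z, g • z = Equiv.swap x y z := by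
  have hcard : Fintype.card (H.rootSet E) = 2 := by
    rw [card_rootSet_eq_natDegree hs hHs, hd]
  have h2 : (H.rootSet E).ncard = 2 := by
    rw [← Nat.card_coe_set_eq, Nat.card_eq_fintype_card, hcard]
  obtain ⟨β, γ, hne, hβγ⟩ := Set.ncard_eq_two.mp h2
  have hH : ∀ x : E, aeval x H = 0 ↔ x = β ∨ x = γ := by
    intro x
    have : x ∈ H.rootSet E ↔ x ∈ ({β, γ} : Set E) := by rw [hβγ]
    rw [mem_rootSet] at this
    simpa [hm.ne_zero] using this
  have hHq : ∀ x : E, aeval x H = 0 → x ∈ q.rootSet E := by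
    intro x hx
    rw [mem_rootSet]
    refine ⟨hq0, ?_⟩
    rw [← aeval_map_algebraMap K, hq, map_mul, hx, mul_zero]
  have hβ := (hH β).mpr (Or.inl rfl)
  have hγ := (hH γ).mpr (Or.inr rfl)
  obtain ⟨σ, hσ⟩ := exists_conj H hm hi β γ hβ hγ
  have hσγ : σ γ = β := by
    have h3 : aeval (σ γ) H = 0 := by
      rw [aeval_algEquiv, AlgHom.comp_apply, hγ]; simp
    rcases (hH _).mp h3 with h | h
    · exact h
    · exact absurd (σ.injective (h.trans hσ.symm)).symm hne
  have hnK : ∀ a : K, aeval (algebraMap K E a) H ≠ 0 := by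
    intro a h
    rw [aeval_algebraMap_apply, map_eq_zero_iff _ (algebraMap K E).injective, coe_aeval_eq_eval] at h
    have h3 : H.natDegree = 1 := natDegree_eq_of_degree_eq_some (degree_eq_one_of_irreducible_of_root hi h)
    omega
  refine ⟨Gal.restrict q E (σ.restrictScalars ℚ), ⟨β, hHq β hβ⟩, ⟨γ, hHq γ hγ⟩, ?_, ?_⟩
  · intro h; exact hne (congrArg Subtype.val h)
  · intro z
    rcases root_cases q s H hq (z : E) (mem_rootSet.mp z.2).2 with h | h
    · obtain ⟨a, h1, h2⟩ := h
      rw [Equiv.swap_apply_of_ne_of_ne]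
      · apply Subtype.ext
        rw [smul_restrict, h2]; simp
      · rintro rfl; apply hnK a; rw [← h2]; exact hβ
      · rintro rfl; apply hnK a; rw [← h2]; exact hγ
    · rcases (hH _).mp h with h | h
      · have : z = ⟨β, hHq β hβ⟩ := Subtype.ext h
        rw [this, Equiv.swap_apply_left]
        apply Subtype.ext
        rw [smul_restrict]; exact hσ
      · have : z = ⟨γ, hHq γ hγ⟩ := Subtype.ext h
        rw [this, Equiv.swap_apply_right]
        apply Subtype.ext
        rw [smul_restrict]; exact hσγ
end

theorem exists_gal_equiv (q : ℚ[X]) (E E' : Type*) [Field E] [Algebra ℚ E] [Field E'] [Algebra ℚ E']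
    [Fact (q.map (algebraMap ℚ E)).Splits] [Fact (q.map (algebraMap ℚ E')).Splits] :
    ∃ e : q.rootSet E ≃ q.rootSet E', ∀ (g : q.Gal) x, e (g • x) = g • e x := by
  refine ⟨(Gal.rootsEquivRoots q E).symm.trans (Gal.rootsEquivRoots q E'), ?_⟩
  intro g x
  rw [Gal.smul_def q E, Gal.smul_def q E']
  simp

/-- group-theoretic conclusion -/
theorem gal_full (q : ℚ[X]) (hqi : Irreducible q) (E : Type*) [Field E] [Algebra ℚ E]
    [Fact (q.map (algebraMap ℚ E)).Splits]
    (h1 : ∃ a : q.rootSet E, ∀ b c : q.rootSet E, b ≠ a → c ≠ a → ∃ g : q.Gal, g • a = a ∧ g • b = c)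
    (h2 : ∃ σ : Equiv.Perm (q.rootSet E), ∃ g : q.Gal, ∃ x y : q.rootSet E, x ≠ y ∧ (∀ z, g • z = σ z) ∧
      (∀ z, z ≠ x → z ≠ y → σ z = z) ∧ σ x = y ∧ σ y = x) :
    Function.Bijective (Gal.galActionHom q E) := by
  classical
  refine ⟨Gal.galActionHom_injective q E, ?_⟩
  rw [← MonoidHom.range_eq_top]
  obtain ⟨σ, g, x, y, hxy, hg, ho, hx, hy⟩ := h2
  have htr := Gal.galAction_isPretransitive q E hqi
  have h2t : MulAction.IsMultiplyPretransitive q.Gal (q.rootSet E) 2 := by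
    rw [MulAction.is_two_pretransitive_iff]
    intro b c d e hbc hde
    obtain ⟨a, ha⟩ := h1
    obtain ⟨u, hu⟩ := htr.exists_smul_eq b a
    obtain ⟨v, hv⟩ := htr.exists_smul_eq d a
    obtain ⟨w, hw1, hw2⟩ := ha (u • c) (v • e) (fun h => hbc (smul_left_cancel u (hu.trans h.symm)))
      (fun h => hde (smul_left_cancel v (hv.trans h.symm)))
    refine ⟨v⁻¹ * w * u, ?_, ?_⟩
    · rw [mul_smul, mul_smul, hu, hw1, ← hv, inv_smul_smul]
    · rw [mul_smul, mul_smul, hw2, inv_smul_smul]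
  have hpr : MulAction.IsPreprimitive (Gal.galActionHom q E).range (q.rootSet E) := by
    have hp := MulAction.isPreprimitive_of_is_two_pretransitive h2t
    let φ : q.Gal → (Gal.galActionHom q E).range := fun g => (Gal.galActionHom q E).rangeRestrict g
    let f : (q.rootSet E) →ₑ[φ] (q.rootSet E) := ⟨id, fun g x => rfl⟩
    exact MulAction.IsPreprimitive.of_surjective (f := f) Function.surjective_id
  refine Equiv.Perm.subgroup_eq_top_of_isPreprimitive_of_isSwap_mem hpr (Equiv.swap x y) ⟨x, y, hxy, rfl⟩ ?_
  refine ⟨g, ?_⟩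
  ext z
  congr 1
  change g • z = _
  rw [hg]
  by_cases h3 : z = x
  · rw [h3, hx, Equiv.swap_apply_left]
  by_cases h4 : z = y
  · rw [h4, hy, Equiv.swap_apply_right]
  rw [ho z h3 h4, Equiv.swap_apply_of_ne_of_ne h3 h4]

end PartD3

section PartD4
open Polynomial

theorem galois_main (n : ℕ) (hn : 2 ≤ n) (f : ℤ[X]) (hf : f.Monic) (hd : f.natDegree = n)
    (h0 : IsUnit (f.coeff 0))
    (h1 : n ≤ 2 ∨ ∃ p : ℕ, ∃ _ : Fact p.Prime, T1 n (f.map (Int.castRingHom (ZMod p))))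
    (h2 : ∃ p : ℕ, ∃ _ : Fact p.Prime, T2 (f.map (Int.castRingHom (ZMod p)))) (q : ℚ[X])
    (hq : q = f.map (algebraMap ℤ ℚ)) [hfact : Fact (q.map (algebraMap ℚ q.SplittingField)).Splits] :
    (q.rootSet q.SplittingField).ncard = n ∧ Function.Bijective (Gal.galActionHom q q.SplittingField) := by
  classical
  have hfi := f_irreducible n hn f hf hd h0 h1 h2
  have hqi : Irreducible q := by
    rw [hq]; exact hf.irreducible_iff_irreducible_map_fraction_map.mp hfi
  have hcard : Nat.card (q.rootSet q.SplittingField) = n := by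
    rw [Nat.card_eq_fintype_card, card_rootSet_eq_natDegree hqi.separable hfact.out, hq, hf.natDegree_map, hd]
  refine ⟨hcard, ?_⟩
  apply gal_full q hqi
  · by_cases hn2 : n ≤ 2
    · have hne : Nonempty (q.rootSet q.SplittingField) := (Nat.card_pos_iff.mp (by omega)).1
      obtain ⟨a⟩ := hne
      refine ⟨a, fun b c hb hc => ⟨1, one_smul _ _, ?_⟩⟩
      rw [one_smul]
      by_contra hbc
      have h3 : ({a, b, c} : Finset (q.rootSet q.SplittingField)).card = 3 := by
        rw [Finset.card_eq_three]; exact ⟨a, b, c, hb.symm, hc.symm, hbc, rfl⟩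
      have h4 := Finset.card_le_univ ({a, b, c} : Finset (q.rootSet q.SplittingField))
      rw [← Nat.card_eq_fintype_card] at h4
      omega
    · obtain ⟨p, hp, a, g, hgm, hgi, hgd, hfg⟩ := h1.resolve_left hn2
      obtain ⟨s, H, hs, hHm, hHi, -, hqH⟩ := padic_factor p f hf g hgm hgi (by omega) {a} (by simpa using hfg)
      rw [Finset.card_singleton, Multiset.card_eq_one] at hs
      obtain ⟨α, rfl⟩ := hs
      rw [← hq] at hqH
      have hE : Fact (q.map (algebraMap ℚ (AlgebraicClosure ℚ_[p]))).Splits := ⟨IsAlgClosed.splits _⟩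
      obtain ⟨x, hx⟩ := stab_trans (E := AlgebraicClosure ℚ_[p]) q hqi.ne_zero α H hHm hHi hqH
      obtain ⟨e, he⟩ := exists_gal_equiv q (AlgebraicClosure ℚ_[p]) q.SplittingField
      refine ⟨e x, fun b c hb hc => ?_⟩
      obtain ⟨g, hg1, hg2⟩ := hx (e.symm b) (e.symm c) (fun h => hb (by rw [← h, e.apply_symm_apply]))
        (fun h => hc (by rw [← h, e.apply_symm_apply]))
      refine ⟨g, by rw [← he, hg1], ?_⟩
      have := congrArg e hg2
      rwa [he, e.apply_symm_apply, e.apply_symm_apply] at this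
  · obtain ⟨p, hp, A, Q, -, -, hQm, hQi, hQd, hfQ⟩ := h2
    obtain ⟨s, H, hs, hHm, hHi, hHd, hqH⟩ := padic_factor p f hf Q hQm hQi hQd.ge A hfQ
    rw [← hq] at hqH
    have hE : Fact (q.map (algebraMap ℚ (AlgebraicClosure ℚ_[p]))).Splits := ⟨IsAlgClosed.splits _⟩
    obtain ⟨g, x, y, hxy, hg⟩ := swap_exists (E := AlgebraicClosure ℚ_[p]) q hqi.ne_zero s H hHm hHi
      (hHd.trans hQd) hHi.separable (IsAlgClosed.splits _) hqH
    obtain ⟨e, he⟩ := exists_gal_equiv q (AlgebraicClosure ℚ_[p]) q.SplittingField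
    refine ⟨MulAction.toPerm g, g, e x, e y, fun h => hxy (e.injective h), fun z => rfl, ?_, ?_, ?_⟩
    · intro z hzx hzy
      obtain ⟨z, rfl⟩ := e.surjective z
      rw [MulAction.toPerm_apply, ← he, hg, Equiv.swap_apply_of_ne_of_ne (fun h => hzx (by rw [h]))
        (fun h => hzy (by rw [h]))]
    · rw [MulAction.toPerm_apply, ← he, hg, Equiv.swap_apply_left]
    · rw [MulAction.toPerm_apply, ← he, hg, Equiv.swap_apply_right]

end PartD4


theorem S_nonempty (n : ℕ) (hn : 2 ≤ n)
    (S : Finset (Matrix.SpecialLinearGroup (Fin n) ℤ))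
    (hS : Subgroup.closure (S : Set (Matrix.SpecialLinearGroup (Fin n) ℤ)) = ⊤) : S.Nonempty := by
  by_contra h
  rw [Finset.not_nonempty_iff_eq_empty] at h
  subst h
  have : Nontrivial (Fin n) := Fin.nontrivial_iff_two_le.mpr hn
  obtain ⟨i, j, hij⟩ := exists_pair_ne (Fin n)
  have h3 : Matrix.SpecialLinearGroup.transvection hij (1:ℤ) ∈ (⊥ : Subgroup (Matrix.SpecialLinearGroup (Fin n) ℤ)) := by
    rw [← Subgroup.closure_empty]
    simp only [Finset.coe_empty] at hS
    rw [hS]; trivial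
  rw [Subgroup.mem_bot] at h3
  have h4 := congrArg (fun A : Matrix.SpecialLinearGroup (Fin n) ℤ => (A : Matrix (Fin n) (Fin n) ℤ) i j) h3
  simp [Matrix.SpecialLinearGroup.transvection_coe, hij] at h4

theorem charpoly_facts (n : ℕ) (M : Matrix.SpecialLinearGroup (Fin n) ℤ) :
    (M : Matrix (Fin n) (Fin n) ℤ).charpoly.Monic ∧ (M : Matrix (Fin n) (Fin n) ℤ).charpoly.natDegree = n ∧
      IsUnit ((M : Matrix (Fin n) (Fin n) ℤ).charpoly.coeff 0) := by
  refine ⟨Matrix.charpoly_monic _, by rw [Matrix.charpoly_natDegree_eq_dim, Fintype.card_fin], ?_⟩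
  have h := Matrix.det_eq_sign_charpoly_coeff (M : Matrix (Fin n) (Fin n) ℤ)
  have h1 : (M : Matrix (Fin n) (Fin n) ℤ).det = 1 := M.2
  rw [h1] at h
  exact isUnit_of_mul_isUnit_right (h ▸ isUnit_one)

theorem charpoly_red (n p : ℕ) (M : Matrix.SpecialLinearGroup (Fin n) ℤ) :
    (Matrix.SpecialLinearGroup.map (Int.castRingHom (ZMod p)) M : Matrix (Fin n) (Fin n) (ZMod p)).charpoly =
      (M : Matrix (Fin n) (Fin n) ℤ).charpoly.map (Int.castRingHom (ZMod p)) := by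
  rw [← Matrix.charpoly_map]; rfl

open scoped Classical in
/-- the proportion of words of length `L` in a finite generating
set of `SL(n, ℤ)` whose product has characteristic polynomial with full
symmetric Galois group over `ℚ` tends to `1` as `L → ∞`. -/
theorem stmt11 (n : ℕ) (hn : 2 ≤ n)
    (S : Finset (Matrix.SpecialLinearGroup (Fin n) ℤ))
    (hS : Subgroup.closure (S : Set (Matrix.SpecialLinearGroup (Fin n) ℤ)) = ⊤) :
    Filter.Tendsto (fun L : ℕ =>
        ((Finset.univ.filter (fun w : Fin L → {x // x ∈ S} =>
            let q : Polynomial ℚ :=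
              (Matrix.charpoly
                  (((List.ofFn fun i => (w i : Matrix.SpecialLinearGroup (Fin n) ℤ)).prod :
                      Matrix.SpecialLinearGroup (Fin n) ℤ) :
                    Matrix (Fin n) (Fin n) ℤ)).map (algebraMap ℤ ℚ)
            Set.ncard (q.rootSet q.SplittingField) = n ∧
              Function.Bijective
                (@Polynomial.Gal.galActionHom ℚ _ q q.SplittingField _ _
                  ⟨Polynomial.SplittingField.splits q⟩))).card : ℝ) /
        ((S.card : ℝ) ^ L))
      Filter.atTop (nhds 1) := by
  obtain ⟨c1, hc1, hB1⟩ := T1_dens n hn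
  obtain ⟨c2, hc2, hB2⟩ := T2_dens n hn
  have w1 := words_avoid n hn S hS _ c1 hc1 (2 * n + 1) hB1
  have w2 := words_avoid n hn S hS _ c2 hc2 (2 * n + 1) hB2
  have hSpos : (0 : ℝ) < S.card := by exact_mod_cast (S_nonempty n hn S hS).card_pos
  have w3 := (tendsto_const_nhds (x := (1 : ℝ)) (f := Filter.atTop (α := ℕ))).sub (w1.add w2)
  rw [add_zero, sub_zero] at w3
  refine tendsto_of_tendsto_of_tendsto_of_le_of_le w3 tendsto_const_nhds ?_ ?_
  · intro L
    have hL : (0 : ℝ) < (S.card : ℝ) ^ L := by positivity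
    simp only
    rw [← add_div, sub_le_iff_le_add, ← add_div, one_le_div hL]
    have hcard : S.card ^ L = (Finset.univ : Finset (Fin L → {x // x ∈ S})).card := by simp
    have hcard' : ((S.card : ℝ) ^ L) = ((Finset.univ : Finset (Fin L → {x // x ∈ S})).card : ℝ) := by
      rw [← hcard]; push_cast; rfl
    rw [hcard', ← Nat.cast_add, ← Nat.cast_add, Nat.cast_le]
    refine le_trans ?_ (add_le_add_right (Finset.card_union_le _ _) _)
    refine le_trans ?_ (Finset.card_union_le _ _)
    apply Finset.card_le_card
    intro w _
    simp only [Finset.mem_union, Finset.mem_filter, Finset.mem_univ, true_and]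
    rw [or_iff_not_imp_right]
    intro hw
    rw [not_or] at hw
    obtain ⟨ha, hb⟩ := hw
    push Not at ha hb
    obtain ⟨p, hp, -, hpm⟩ := ha
    obtain ⟨p', hp', -, hpm'⟩ := hb
    have f1 := Fact.mk hp
    have f2 := Fact.mk hp'
    have hpm := hpm f1
    have hpm' := hpm' f2
    rw [charpoly_red] at hpm hpm'
    obtain ⟨g1, g2, g3⟩ := charpoly_facts n (List.ofFn fun i => (w i : Matrix.SpecialLinearGroup (Fin n) ℤ)).prod
    exact galois_main n hn _ g1 g2 g3 (hpm.imp id fun h => ⟨p, f1, h⟩) ⟨p', f2, hpm'⟩ _ rfl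
      (hfact := ⟨Polynomial.SplittingField.splits _⟩)
  · intro L
    have hL : (0 : ℝ) < (S.card : ℝ) ^ L := by positivity
    simp only
    rw [div_le_one hL]
    have hcard : S.card ^ L = (Finset.univ : Finset (Fin L → {x // x ∈ S})).card := by simp
    have hcard' : ((S.card : ℝ) ^ L) = ((Finset.univ : Finset (Fin L → {x // x ∈ S})).card : ℝ) := by
      rw [← hcard]; push_cast; rfl
    rw [hcard', Nat.cast_le]
    exact Finset.card_le_card (Finset.filter_subset _ _)
end

section
/- Fix n ≥ 2 and let S be a finite subset of SL(n, ℤ) whose elements generate SL(n, ℤ) as a group. For each L, among the |S|^L words w : Fin L → S, let G(L) be the number of words such that for every integer k ≥ 1, the characteristic polynomial of the underlying integer matrix of M_w^k, mapped to ℚ[X], is irreducible. Then G(L) / |S|^L tends to 1 as L tends to infinity. -/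
section PartA
open Matrix
open scoped commutatorElement

theorem A_coe {ι F : Type*} [Fintype ι] [DecidableEq ι] [Field F] {i j : ι} (hij : i ≠ j) (a : F) :
    SpecialLinearGroup.coeMonoidHom (SpecialLinearGroup.transvection hij a) = 1 + single i j a := rfl

theorem A_coe' {ι F : Type*} [Fintype ι] [DecidableEq ι] [Field F] {i j : ι} (hij : i ≠ j) (a : F)
    (ha : a ≠ 0) :
    SpecialLinearGroup.coeMonoidHom (SpecialLinearGroup.diag2n hij a ha) = diagonal (fun k ↦
      if k = i then a else if k = j then a⁻¹ else 1) := rfl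

theorem A_diag2n {ι F : Type*} [Fintype ι] [DecidableEq ι] [Field F] {i j : ι} (hij : i ≠ j) (a : F)
    (ha : a ≠ 0) : SpecialLinearGroup.diag2n hij a ha =
      SpecialLinearGroup.transvection hij a *
      SpecialLinearGroup.transvection hij.symm (- a⁻¹) *
      SpecialLinearGroup.transvection hij a *
      SpecialLinearGroup.transvection hij (-1) *
      SpecialLinearGroup.transvection hij.symm 1 *
      SpecialLinearGroup.transvection hij (-1) := by
  apply SpecialLinearGroup.coeMonoidHom_injective
  have h1 : (SpecialLinearGroup.diag2n hij a ha : Matrix ι ι F) = 1 + single i i (a-1) + single j j (a⁻¹-1) := by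
    rw [SpecialLinearGroup.diag2n_coe]
    ext k l
    by_cases hkl : k = l
    · subst hkl
      by_cases hki : k = i
      · subst hki; simp [single_apply, hij.symm]
      · by_cases hkj : k = j
        · subst hkj; simp [single_apply, hki, hij]
        · simp [single_apply, hki, hkj, Ne.symm hki, Ne.symm hkj]
    · simp only [Matrix.add_apply, single_apply, diagonal_apply, hkl, if_false, one_apply]
      grind
  rw [SpecialLinearGroup.coeMonoidHom_apply, h1]
  simp only [map_mul, A_coe]
  simp only [mul_add, add_mul, single_mul_single_same, single_mul_single_of_ne _ _ _ _ hij, single_mul_single_of_ne _ _ _ _ hij.symm, mul_one, one_mul, add_zero, zero_add, zero_mul, mul_zero]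
  ext k l
  by_cases hk : k = i <;> by_cases hl : l = j <;> by_cases hk' : k = j <;> by_cases hl' : l = i <;> subst_vars <;> simp_all [single_apply, eq_comm] <;> field_simp <;> ring

theorem A_induction {ι F : Type*} [Fintype ι] [DecidableEq ι] [Nontrivial ι] [Field F]
    (K : Subgroup (SpecialLinearGroup ι F))
    (h : ∀ (i j : ι) (hij : i ≠ j) (a : F), SpecialLinearGroup.transvection hij a ∈ K) : K = ⊤ := by
  rw [eq_top_iff]
  intro M _
  refine SpecialLinearGroup.diagonal_transvection_induction' (fun M => M ∈ K) M ?_ h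
    (fun A B hA hB => mul_mem hA hB)
  intro i j hij c hc
  rw [A_diag2n]
  refine mul_mem (mul_mem (mul_mem (mul_mem (mul_mem ?_ ?_) ?_) ?_) ?_) ?_ <;> exact h _ _ _ _

theorem A_perfect {ι F : Type*} [Fintype ι] [DecidableEq ι] [Nontrivial ι] [Field F]
    (a : F) (ha : a ≠ 0) (ha2 : a ^ 2 ≠ 1) : commutator (SpecialLinearGroup ι F) = ⊤ := by
  apply A_induction
  intro i j hij c
  set b := c / (a ^ 2 - 1) with hb
  have hc : c = b * (a^2-1) := (div_mul_cancel₀ c (sub_ne_zero_of_ne ha2)).symm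
  have key : SpecialLinearGroup.diag2n hij a ha * SpecialLinearGroup.transvection hij b =
    SpecialLinearGroup.transvection hij c * SpecialLinearGroup.transvection hij b *
      SpecialLinearGroup.diag2n hij a ha := by
    rw [← SpecialLinearGroup.transvection_add]
    apply SpecialLinearGroup.coeMonoidHom_injective
    simp only [map_mul, A_coe, A_coe']
    have : c + b = a^2 * b := by rw [hc]; ring
    rw [this]
    ext k l
    simp only [mul_add, add_mul, mul_one, one_mul, Matrix.add_apply, diagonal_mul, mul_diagonal, single_apply]
    by_cases hk : i = k <;> by_cases hl : j = l
    · subst hk hl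
      simp [hij, hij.symm]; field_simp
    all_goals
      by_cases hkl : k = l
      · subst hkl; simp [hk, hl]
      · simp [hk, hl, hkl]
  have : ⁅SpecialLinearGroup.diag2n hij a ha, SpecialLinearGroup.transvection hij b⁆ = SpecialLinearGroup.transvection hij c := by
    rw [commutatorElement_def, key]; group
  rw [← this]
  exact Subgroup.commutator_mem_commutator (Subgroup.mem_top _) (Subgroup.mem_top _)

theorem A_surj {ι : Type*} [Fintype ι] [DecidableEq ι] [Nontrivial ι] (p : ℕ) [Fact p.Prime] :
    Function.Surjective (SpecialLinearGroup.map (n := ι) (Int.castRingHom (ZMod p))) := by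
  rw [← MonoidHom.range_eq_top]
  apply A_induction
  intro i j hij a
  obtain ⟨z, rfl⟩ := ZMod.intCast_surjective a
  refine ⟨SpecialLinearGroup.transvection hij z, ?_⟩
  apply SpecialLinearGroup.coeMonoidHom_injective
  simp only [SpecialLinearGroup.coeMonoidHom_apply]
  ext k l
  simp [SpecialLinearGroup.transvection_coe, SpecialLinearGroup.map_apply_coe, one_apply, single_apply]

end PartA

section PartB
open scoped Pointwise

/-- In a finite perfect group, the words of some fixed length in a generating set cover everything. -/
theorem B_cover {H : Type*} [Group H] [Finite H] (hperf : commutator H = ⊤) (T : Set H)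
    (hne : T.Nonempty) (hT : Subgroup.closure T = ⊤) : ∃ m : ℕ, T ^ m = Set.univ := by
  classical
  set e := Nat.card H with he
  have hepos : 0 < e := Nat.card_pos
  have hpow : ∀ h : H, h ^ e = 1 := fun h => pow_card_eq_one'
  obtain ⟨s0, hs0⟩ := hne
  have h1 : (1 : H) ∈ T ^ e := by
    rw [← hpow s0]; exact Set.pow_mem_pow hs0
  have hinv : ∀ s ∈ T, s⁻¹ ∈ T ^ (e-1) := by
    intro s hs
    have : s⁻¹ = s ^ (e-1) := by
      rw [inv_eq_iff_mul_eq_one, ← pow_succ', Nat.sub_add_cancel hepos, hpow]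
    rw [this]; exact Set.pow_mem_pow hs
  have hmul : ∀ {a b : ℕ} {x y : H}, x ∈ T ^ a → y ∈ T ^ b → x * y ∈ T ^ (a+b) := by
    intro a b x y hx hy
    rw [pow_add]; exact Set.mul_mem_mul hx hy
  have hmono : ∀ j k : ℕ, j ≤ k → T ^ (j*e) ⊆ T ^ (k*e) := by
    intro j k hjk
    induction k, hjk using Nat.le_induction with
    | base => exact subset_rfl
    | succ k _ ih =>
      refine ih.trans ?_
      intro x hx
      have := hmul hx h1
      rwa [mul_one, ← Nat.succ_mul] at this
  have hpw : ∀ (j i : ℕ) (x : H), x ∈ T ^ (j*e) → x ^ i ∈ T ^ (i*j*e) := by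
    intro j i x hx
    have := Set.pow_mem_pow hx (n := i)
    rwa [← pow_mul, show j * e * i = i * j * e by ring] at this
  let N : Subgroup H :=
    { carrier := {h | ∃ j, h ∈ T ^ (j*e)}
      one_mem' := ⟨0, by simp⟩
      mul_mem' := by
        rintro a b ⟨j, hj⟩ ⟨k, hk⟩
        exact ⟨j+k, by rw [add_mul]; exact hmul hj hk⟩
      inv_mem' := by
        rintro a ⟨j, hj⟩
        refine ⟨(e-1)*j, ?_⟩
        have : a⁻¹ = a ^ (e-1) := by
          rw [inv_eq_iff_mul_eq_one, ← pow_succ', Nat.sub_add_cancel hepos, hpow]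
        rw [this]; exact hpw _ _ _ hj }
  have hNmem : ∀ x, x ∈ N ↔ ∃ j, x ∈ T ^ (j*e) := fun x => Iff.rfl
  have hnorm : N.Normal := by
    rw [← Subgroup.normalizer_eq_top_iff, eq_top_iff, ← hT, Subgroup.closure_le]
    intro s hs
    have key : ∀ t : H, t ∈ T → ∀ x ∈ N, t * x * t⁻¹ ∈ N := by
      rintro t ht x ⟨j, hj⟩
      refine ⟨j+1, ?_⟩
      have h2 : t ∈ T ^ 1 := by simpa using ht
      have := hmul (hmul h2 hj) (hinv t ht)
      rwa [show 1 + j * e + (e-1) = (j+1)*e by rw [add_mul]; omega] at this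
    rw [SetLike.mem_coe, Subgroup.mem_normalizer_iff]
    intro x
    refine ⟨key s hs x, ?_⟩
    intro hx
    have hk : ∀ i : ℕ, ∀ y ∈ N, s ^ i * y * (s ^ i)⁻¹ ∈ N := by
      intro i
      induction i with
      | zero => intro y hy; simpa using hy
      | succ i ih =>
        intro y hy
        have := key s hs _ (ih y hy)
        rw [pow_succ']
        convert this using 1
        group
    have := hk (e-1) _ hx
    have h3 : s ^ (e-1) = s⁻¹ := by
      rw [eq_comm, inv_eq_iff_mul_eq_one, ← pow_succ', Nat.sub_add_cancel hepos, hpow]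
    rw [h3] at this
    convert this using 1
    group
  have hNtop : N = ⊤ := by
    rw [eq_top_iff, ← hperf]
    -- the quotient is cyclic
    have hz : ∀ q : H ⧸ N, q ∈ Subgroup.zpowers (QuotientGroup.mk s0 : H ⧸ N) := by
      intro q
      induction q using QuotientGroup.induction_on with
      | H x =>
        have hx : x ∈ Subgroup.closure T := by rw [hT]; trivial
        have hle : Subgroup.closure T ≤ (Subgroup.zpowers (QuotientGroup.mk s0 : H ⧸ N)).comap (QuotientGroup.mk' N) := by
          rw [Subgroup.closure_le]
          intro s hs
          have : (QuotientGroup.mk s0 : H ⧸ N) = QuotientGroup.mk s := by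
            rw [QuotientGroup.eq]
            refine ⟨1, ?_⟩
            have h2 : s ∈ T ^ 1 := by simpa using hs
            have := hmul (hinv s0 hs0) h2
            rwa [show e - 1 + 1 = 1 * e by omega] at this
          simp only [Subgroup.coe_comap, Set.mem_preimage, SetLike.mem_coe, QuotientGroup.mk'_apply]
          rw [← this]
          exact Subgroup.mem_zpowers _
        exact hle hx
    rw [commutator_def, Subgroup.commutator_le]
    intro a _ b _
    rw [← QuotientGroup.eq_one_iff]
    obtain ⟨i, hi⟩ := hz (QuotientGroup.mk a)
    obtain ⟨j, hj⟩ := hz (QuotientGroup.mk b)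
    simp only at hi hj
    rw [commutatorElement_def]
    simp only [QuotientGroup.mk_mul, QuotientGroup.mk_inv]
    rw [← hi, ← hj]
    group
  have hall : ∀ x : H, ∃ j, x ∈ T ^ (j*e) := fun x => (hNmem x).1 (hNtop ▸ Subgroup.mem_top x)
  choose j hj using hall
  have := Fintype.ofFinite H
  refine ⟨(∑ x, j x) * e, Set.eq_univ_of_forall fun x => ?_⟩
  exact hmono _ _ (Finset.single_le_sum (fun _ _ => Nat.zero_le _) (Finset.mem_univ x)) (hj x)

/-- one step of the (unnormalised) walk operator -/
noncomputable def walkOp {ι H : Type*} [Fintype ι] [Mul H] (s : ι → H) (g : H → ℝ) : H → ℝ :=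
  fun x => ∑ i, g (x * s i)

theorem B_iter {ι H : Type*} [Fintype ι] [Group H] (s : ι → H) (g : H → ℝ) (L : ℕ) (x : H) :
    (walkOp s)^[L] g x = ∑ w : Fin L → ι, g (x * (List.ofFn fun i => s (w i)).prod) := by
  induction L generalizing x with
  | zero => simp
  | succ L ih =>
    rw [Function.iterate_succ_apply', walkOp]
    simp_rw [ih]
    rw [← (Fin.consEquiv (fun _ : Fin (L+1) => ι)).sum_comp, Fintype.sum_prod_type]
    simp [Fin.consEquiv, mul_assoc]

theorem B_sum {ι H : Type*} [Fintype ι] [Group H] [Fintype H] (s : ι → H) (g : H → ℝ)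
    (hg : ∑ x, g x = 0) (L : ℕ) : ∑ x, (walkOp s)^[L] g x = 0 := by
  induction L with
  | zero => simpa using hg
  | succ L ih =>
    simp only [Function.iterate_succ_apply', walkOp]
    rw [Finset.sum_comm]
    apply Finset.sum_eq_zero
    intro i _
    rw [← ih]
    exact Equiv.sum_comp (Equiv.mulRight (s i)) ((walkOp s)^[L] g)

theorem B_bound {ι H : Type*} [Fintype ι] [Group H] (s : ι → H) (g : H → ℝ) (C : ℝ)
    (hg : ∀ x, g x ≤ C) (L : ℕ) (x : H) : (walkOp s)^[L] g x ≤ (Fintype.card ι : ℝ) ^ L * C := by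
  rw [B_iter]
  refine (Finset.sum_le_sum fun w _ => hg _).trans ?_
  simp

theorem B_contract {ι H : Type*} [Fintype ι] [Group H] [Fintype H] (s : ι → H) (m : ℕ)
    (hm : ∀ h : H, ∃ w : Fin m → ι, (List.ofFn fun i => s (w i)).prod = h)
    (g : H → ℝ) (C : ℝ) (hg0 : ∑ x, g x = 0)
    (hg : ∀ x, g x ≤ C) (x : H) :
    (walkOp s)^[m] g x ≤ ((Fintype.card ι : ℝ) ^ m - Fintype.card H) * C := by
  classical
  choose w hw using hm
  have hinj : Function.Injective w := fun a b hab => by rw [← hw a, hab, hw b]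
  rw [B_iter, ← Finset.sum_sdiff (Finset.subset_univ (Finset.univ.image w))]
  have h1 : ∑ v ∈ Finset.univ.image w, g (x * (List.ofFn fun i => s (v i)).prod) = 0 := by
    rw [Finset.sum_image hinj.injOn]
    simp_rw [hw]
    rw [← hg0]
    exact Equiv.sum_comp (Equiv.mulLeft x) g
  rw [h1, add_zero]
  refine (Finset.sum_le_sum fun w _ => hg _).trans ?_
  rw [Finset.sum_const, Finset.card_sdiff_of_subset (Finset.subset_univ _),
    Finset.card_image_of_injective _ hinj, nsmul_eq_mul, Nat.cast_sub]
  · simp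
  · rw [← Finset.card_image_of_injective _ hinj]; exact Finset.card_le_card (Finset.subset_univ _)

theorem B_mix {ι H : Type*} [Fintype ι] [Group H] [Fintype H] (s : ι → H) (m : ℕ) (hmpos : 0 < m)
    (hm : ∀ h : H, ∃ w : Fin m → ι, (List.ofFn fun i => s (w i)).prod = h)
    (B : H → Prop) [DecidablePred B] (ε : ℝ) (hε : 0 < ε) :
    ∀ᶠ L : ℕ in Filter.atTop,
      ((Finset.univ.filter fun w : Fin L → ι => B (List.ofFn fun i => s (w i)).prod).card : ℝ) /
        (Fintype.card ι : ℝ) ^ L ≤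
        ((Finset.univ.filter B).card : ℝ) / Fintype.card H + ε := by
  classical
  set q : ℝ := (Fintype.card ι : ℝ) with hq
  set N : ℝ := (Fintype.card H : ℝ) with hN
  have hNpos : 0 < N := by rw [hN]; exact_mod_cast Fintype.card_pos
  have hNq : N ≤ q ^ m := by
    have : Fintype.card H ≤ Fintype.card (Fin m → ι) := by
      choose w hw using hm
      exact Fintype.card_le_of_injective w fun a b hab => by rw [← hw a, hab, hw b]
    rw [hN, hq]
    have h2 : Fintype.card (Fin m → ι) = Fintype.card ι ^ m := by simp
    rw [h2] at this
    exact_mod_cast this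
  have hqpos : 0 < q := by
    by_contra h
    have h0 : q = 0 := le_antisymm (not_lt.1 h) (by rw [hq]; positivity)
    rw [h0, zero_pow hmpos.ne'] at hNq
    linarith
  set a : ℝ := ((Finset.univ.filter B).card : ℝ) / N with ha
  let g : H → ℝ := fun x => (if B x then 1 else 0) - a
  have hg0 : ∑ x, g x = 0 := by
    simp only [g, Finset.sum_sub_distrib, Finset.sum_boole, Finset.sum_const, nsmul_eq_mul,
      Finset.card_univ]
    rw [ha, ← hN, mul_div_cancel₀ _ hNpos.ne', sub_self]
  have ha0 : 0 ≤ a := by positivity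
  have hg1 : ∀ x, g x ≤ 1 := by
    intro x; simp only [g]; split_ifs <;> linarith
  have hk : ∀ k : ℕ, ∀ x, (walkOp s)^[m*k] g x ≤ (q ^ m - N) ^ k := by
    intro k
    induction k with
    | zero => simpa using hg1
    | succ k ih =>
      intro x
      rw [Nat.mul_succ, Nat.add_comm, Function.iterate_add_apply, pow_succ']
      exact B_contract s m hm _ _ (B_sum s g hg0 _) ih x
  set δ : ℝ := (q ^ m - N) / q ^ m with hδ
  have hδ0 : 0 ≤ δ := div_nonneg (by linarith) (by positivity)
  have hδ1 : δ < 1 := by rw [hδ, div_lt_one (by positivity)]; linarith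
  have ht : Filter.Tendsto (fun L : ℕ => δ ^ (L / m)) Filter.atTop (nhds 0) :=
    (tendsto_pow_atTop_nhds_zero_of_lt_one hδ0 hδ1).comp (Nat.tendsto_div_const_atTop hmpos.ne')
  filter_upwards [ht.eventually_lt_const hε] with L hL
  have h1 : (walkOp s)^[L] g 1 ≤ q ^ (L % m) * (q ^ m - N) ^ (L / m) := by
    conv_lhs => rw [← Nat.mod_add_div L m]
    rw [Function.iterate_add_apply]
    exact B_bound s _ _ (hk _) _ _
  rw [B_iter] at h1
  simp only [one_mul, g, Finset.sum_sub_distrib, Finset.sum_boole, Finset.sum_const, nsmul_eq_mul,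
      Finset.card_univ, Fintype.card_fun, Fintype.card_fin, Nat.cast_pow] at h1
  have hqL : q ^ L = q ^ (L % m) * (q ^ m) ^ (L / m) := by
    rw [← pow_mul, ← pow_add, Nat.mod_add_div]
  have h2 : q ^ (L % m) * (q ^ m - N) ^ (L / m) = q ^ L * δ ^ (L / m) := by
    rw [hqL, hδ, div_pow]; field_simp
  rw [div_le_iff₀ (by positivity)]
  rw [h2, ← hq] at h1
  have : q ^ L * δ ^ (L / m) ≤ q ^ L * ε := by gcongr
  nlinarith

end PartB

section PartC
open Matrix

theorem C_order (ζ : ℂ) (r : ℕ) (hr : 0 < r) (hζ : ζ ^ r = 1) (P : Polynomial ℤ) (hP : P.Monic)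
    (hroot : Polynomial.aeval ζ P = 0) : ζ ^ (Nat.factorial (2 * P.natDegree)) = 1 := by
  have hfin : IsOfFinOrder ζ := isOfFinOrder_iff_pow_eq_one.2 ⟨r, hr, hζ⟩
  have hpos : 0 < orderOf ζ := hfin.orderOf_pos
  have hprim := IsPrimitiveRoot.orderOf ζ
  have hmin := Polynomial.cyclotomic_eq_minpoly hprim hpos
  have hdvd : minpoly ℤ ζ ∣ P :=
    minpoly.isIntegrallyClosed_dvd (hprim.isIntegral hpos) hroot
  have hdeg : Nat.totient (orderOf ζ) ≤ P.natDegree := by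
    rw [← Polynomial.natDegree_cyclotomic (orderOf ζ) ℤ, hmin]
    exact Polynomial.natDegree_le_of_dvd hdvd hP.ne_zero
  have : orderOf ζ ∣ Nat.factorial (2 * P.natDegree) := by
    rw [Nat.dvd_iff_prime_pow_dvd_dvd]
    intro p k hp hpk
    rcases Nat.eq_zero_or_pos k with rfl | hk
    · simp
    apply Nat.dvd_factorial (pow_pos hp.pos _)
    have h1 : Nat.totient (p ^ k) ≤ P.natDegree :=
      (Nat.le_of_dvd (Nat.totient_pos.2 hpos) (Nat.totient_dvd_of_dvd hpk)).trans hdeg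
    rw [Nat.totient_prime_pow hp hk] at h1
    have h2 : p ^ k = p ^ (k-1) * p := by rw [← pow_succ, Nat.sub_add_cancel hk]
    have h3 : p ≤ 2 * (p - 1) := by have := hp.two_le; omega
    calc p ^ k = p ^ (k-1) * p := h2
      _ ≤ p ^ (k-1) * (2 * (p-1)) := Nat.mul_le_mul_left _ h3
      _ = 2 * (p ^ (k-1) * (p-1)) := by ring
      _ ≤ _ := Nat.mul_le_mul_left _ h1
  exact orderOf_dvd_iff_pow_eq_one.1 this

/-- tensor power of a matrix -/
def tens {R : Type*} [CommRing R] {n : ℕ} (d : ℕ) (A : Matrix (Fin n) (Fin n) R) :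
    Matrix (Fin d → Fin n) (Fin d → Fin n) R :=
  Matrix.of fun φ ψ => ∏ j, A (φ j) (ψ j)

/-- the test function -/
noncomputable def Gd {R : Type*} [CommRing R] {n : ℕ} (K d : ℕ) (A : Matrix (Fin n) (Fin n) R) : R :=
  det ((tens d A) ^ (n * K) - (A.det ^ (d * K)) • (1 : Matrix (Fin d → Fin n) (Fin d → Fin n) R))

theorem tens_map {R R' : Type*} [CommRing R] [CommRing R'] (f : R →+* R') {n : ℕ} (d : ℕ)
    (A : Matrix (Fin n) (Fin n) R) : tens d (f.mapMatrix A) = f.mapMatrix (tens d A) := by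
  ext φ ψ
  simp [tens]

theorem Gd_map {R R' : Type*} [CommRing R] [CommRing R'] (f : R →+* R') {n : ℕ} (K d : ℕ)
    (A : Matrix (Fin n) (Fin n) R) : Gd K d (f.mapMatrix A) = f (Gd K d A) := by
  rw [Gd, Gd, tens_map, RingHom.map_det, map_sub, map_pow, ← RingHom.map_det]
  congr 2
  ext φ ψ
  by_cases h : φ = ψ <;> simp [Matrix.one_apply, h]

theorem tens_smul {R : Type*} [CommRing R] {n : ℕ} (d : ℕ) (c : R)
    (A : Matrix (Fin n) (Fin n) R) : tens d (c • A) = c ^ d • tens d A := by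
  ext φ ψ
  simp [tens, Finset.prod_mul_distrib]

theorem Gd_smul {R : Type*} [CommRing R] {n : ℕ} (K d : ℕ) (c : R)
    (A : Matrix (Fin n) (Fin n) R) (h : Gd K d A = 0) : Gd K d (c • A) = 0 := by
  have : (tens d (c • A)) ^ (n * K) - ((c • A).det ^ (d * K)) • (1 : Matrix (Fin d → Fin n) (Fin d → Fin n) R)
    = c ^ (d * n * K) • ((tens d A) ^ (n * K) - (A.det ^ (d * K)) • (1 : Matrix (Fin d → Fin n) (Fin d → Fin n) R)) := by
    rw [tens_smul, smul_pow, det_smul, smul_sub, smul_smul, mul_pow, ← pow_mul, ← pow_mul, Fintype.card_fin]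
    congr 3 <;> ring
  rw [Gd, this, det_smul]
  rw [Gd] at h
  rw [h, mul_zero]

theorem Gd_diag {n : ℕ} (K d : ℕ) (hK : 0 < K) (hd : 0 < d) (hdn : d < n) :
    Gd K d (Matrix.diagonal fun i : Fin n => (Nat.nth Nat.Prime i : ℤ)) ≠ 0 := by
  have ht : tens d (Matrix.diagonal fun i : Fin n => (Nat.nth Nat.Prime i : ℤ)) =
      Matrix.diagonal fun φ : Fin d → Fin n => ∏ j, (Nat.nth Nat.Prime (φ j) : ℤ) := by
    ext φ ψ
    by_cases h : φ = ψ
    · subst h; simp [tens]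
    · rw [Matrix.diagonal_apply_ne _ h]
      obtain ⟨j, hj⟩ := Function.ne_iff.1 h
      simp only [tens, of_apply]
      exact Finset.prod_eq_zero (Finset.mem_univ j) (Matrix.diagonal_apply_ne _ hj)
  rw [Gd, ht, Matrix.diagonal_pow, ← Matrix.diagonal_one, ← Matrix.diagonal_smul, Matrix.diagonal_sub, Matrix.det_diagonal,
    Finset.prod_ne_zero_iff]
  intro φ _
  simp only [Matrix.det_diagonal, Pi.pow_apply, Pi.smul_apply, smul_eq_mul, Pi.one_apply, mul_one]
  rw [sub_ne_zero]
  norm_cast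
  obtain ⟨i, hi⟩ : ∃ i, i ∉ Set.range φ := by
    by_contra! hcon
    have : Function.Surjective φ := hcon
    have := Fintype.card_le_of_surjective φ this
    simp at this; omega
  intro heq
  have hp : (Nat.nth Nat.Prime i).Prime := Nat.prime_nth_prime i
  have h1 : Nat.nth Nat.Prime i ∣ (∏ i : Fin n, Nat.nth Nat.Prime i) ^ (d * K) :=
    dvd_pow (Finset.dvd_prod_of_mem (fun i : Fin n => Nat.nth Nat.Prime i) (Finset.mem_univ i)) (by positivity)
  rw [← heq] at h1
  have h2 := hp.dvd_of_dvd_pow h1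
  rw [hp.prime.dvd_finsetProd_iff] at h2
  obtain ⟨j, _, hj⟩ := h2
  have h3 := (Nat.prime_dvd_prime_iff_eq hp (Nat.prime_nth_prime (φ j))).1 hj
  have h4 := Nat.nth_injective Nat.infinite_setOfPred_prime h3
  exact hi ⟨j, Fin.ext h4.symm⟩

theorem tens_mulVec {R : Type*} [CommRing R] {n : ℕ} (d : ℕ) (A : Matrix (Fin n) (Fin n) R)
    (v : Fin d → Fin n → R) :
    tens d A *ᵥ (fun ψ => ∏ j, v j (ψ j)) = fun φ => ∏ j, (A *ᵥ v j) (φ j) := by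
  ext φ
  simp only [mulVec, dotProduct, tens, of_apply]
  rw [Finset.prod_univ_sum]
  simp [Finset.prod_mul_distrib]

theorem C_eig {n : ℕ} (A : Matrix (Fin n) (Fin n) ℂ) (μ : ℂ) (h : A.charpoly.IsRoot μ) :
    ∃ v : Fin n → ℂ, v ≠ 0 ∧ A *ᵥ v = μ • v := by
  rw [Polynomial.IsRoot, Matrix.eval_charpoly, ← Matrix.exists_mulVec_eq_zero_iff] at h
  obtain ⟨v, hv, hv0⟩ := h
  refine ⟨v, hv, ?_⟩
  rw [Matrix.sub_mulVec, sub_eq_zero] at hv0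
  rw [← hv0]
  ext i
  simp [Matrix.scalar_apply, Matrix.mulVec_diagonal]

theorem C_root_of_eig {ι : Type*} [Fintype ι] [DecidableEq ι] (A : Matrix ι ι ℂ) (μ : ℂ)
    (v : ι → ℂ) (hv : v ≠ 0) (h : A *ᵥ v = μ • v) : A.charpoly.IsRoot μ := by
  rw [Polynomial.IsRoot, Matrix.eval_charpoly, ← Matrix.exists_mulVec_eq_zero_iff]
  refine ⟨v, hv, ?_⟩
  rw [Matrix.sub_mulVec, h, sub_eq_zero]
  ext i
  simp [Matrix.scalar_apply, Matrix.mulVec_diagonal]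

theorem C_pow_mulVec {ι : Type*} [Fintype ι] [DecidableEq ι] (A : Matrix ι ι ℂ) (μ : ℂ)
    (v : ι → ℂ) (h : A *ᵥ v = μ • v) (k : ℕ) : (A ^ k) *ᵥ v = μ ^ k • v := by
  induction k with
  | zero => simp
  | succ k ih =>
    rw [pow_succ, ← Matrix.mulVec_mulVec, h, Matrix.mulVec_smul, ih, smul_smul, pow_succ']

theorem C_bad {n : ℕ} (hn : 2 ≤ n) (A : Matrix (Fin n) (Fin n) ℤ) (hA : A.det = 1) (k : ℕ)
    (hk : 1 ≤ k) (hbad : ¬ Irreducible ((Matrix.charpoly (A ^ k)).map (algebraMap ℤ ℚ))) :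
    ∃ d, 0 < d ∧ d < n ∧ Gd (Nat.factorial (2 * n ^ n)) d A = 0 := by
  have hmon : (Matrix.charpoly (A ^ k)).Monic := Matrix.charpoly_monic _
  have hdeg : (Matrix.charpoly (A ^ k)).natDegree = n := by
    rw [Matrix.charpoly_natDegree_eq_dim, Fintype.card_fin]
  rw [← hmon.irreducible_iff_irreducible_map_fraction_map, hmon.irreducible_iff_natDegree'] at hbad
  push Not at hbad
  obtain ⟨h, g, hh, hg, hgh, hgd⟩ := hbad (by
    intro h1
    rw [h1, Polynomial.natDegree_one] at hdeg
    omega)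
  rw [Finset.mem_Ioc, hdeg] at hgd
  have hunit : IsUnit (g.coeff 0) := by
    have h1 := Matrix.det_eq_sign_charpoly_coeff (A ^ k)
    rw [Matrix.det_pow, hA, one_pow, ← hgh, Polynomial.mul_coeff_zero] at h1
    refine IsUnit.of_mul_eq_one ((-1) ^ Fintype.card (Fin n) * h.coeff 0) ?_
    refine Eq.trans ?_ h1.symm
    ring
  set f := Int.castRingHom ℂ with hf
  set AC := f.mapMatrix A with hAC
  set gC := g.map f with hgC
  have hgCm : gC.Monic := hg.map _
  have hspl : gC.Splits := IsAlgClosed.splits _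
  have hcard : gC.roots.card = g.natDegree := by
    rw [← hspl.natDegree_eq_card_roots, hgC, hg.natDegree_map]
  have hprod : gC.roots.prod ^ 2 = 1 := by
    have h1 := hspl.coeff_zero_eq_prod_roots_of_monic hgCm
    have h2 : gC.coeff 0 ^ 2 = 1 := by
      rw [hgC, Polynomial.coeff_map]
      rcases Int.isUnit_iff.1 hunit with h | h <;> rw [h] <;> simp
    rw [h1, mul_pow, ← pow_mul, mul_comm _ 2, pow_mul] at h2
    simpa using h2
  have hev : ∀ r ∈ gC.roots, ∃ (μ : ℂ) (v : Fin n → ℂ), μ ^ k = r ∧ v ≠ 0 ∧ AC *ᵥ v = μ • v := by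
    intro r hr
    have h1 : gC.IsRoot r := Polynomial.isRoot_of_mem_roots hr
    have h2 : (AC ^ k).charpoly.IsRoot r := by
      have : (AC ^ k).charpoly = (h.map f) * gC := by
        rw [hAC, ← map_pow, RingHom.mapMatrix_apply, Matrix.charpoly_map, ← hgh, Polynomial.map_mul]
      rw [this]
      exact Polynomial.root_mul_left_of_isRoot _ h1
    rw [← Matrix.mem_spectrum_iff_isRoot_charpoly, spectrum.map_pow_of_pos _ hk] at h2
    obtain ⟨μ, hμ, hμr⟩ := h2
    obtain ⟨v, hv⟩ := C_eig AC μ (Matrix.mem_spectrum_iff_isRoot_charpoly.1 hμ)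
    exact ⟨μ, v, hμr, hv⟩
  set l := gC.roots.toList with hl
  have hlen : l.length = g.natDegree := by rw [hl, Multiset.length_toList, hcard]
  have hev' : ∀ j : Fin l.length, ∃ (μ : ℂ) (v : Fin n → ℂ), μ ^ k = l.get j ∧ v ≠ 0 ∧ AC *ᵥ v = μ • v :=
    fun j => hev _ (Multiset.mem_toList.1 (List.get_mem l j))
  choose μ v hμ hv hev2 using hev'
  set ζ := ∏ j, μ j with hζ
  have hζk : ζ ^ k = gC.roots.prod := by
    rw [hζ, ← Finset.prod_pow]
    simp_rw [hμ]
    rw [← List.prod_ofFn, List.ofFn_get, hl, Multiset.prod_toList]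
  have hζ1 : ζ ^ (k * 2) = 1 := by rw [pow_mul, hζk, hprod]
  refine ⟨l.length, by omega, by omega, ?_⟩
  set V : (Fin l.length → Fin n) → ℂ := fun ψ => ∏ j, v j (ψ j) with hV
  have hV0 : V ≠ 0 := by
    have : ∀ j, ∃ i, v j i ≠ 0 := fun j => Function.ne_iff.1 (hv j)
    choose i hi using this
    exact Function.ne_iff.2 ⟨i, Finset.prod_ne_zero_iff.2 fun j _ => hi j⟩
  have hT : tens l.length AC *ᵥ V = ζ • V := by
    rw [hV, tens_mulVec]
    ext φ
    simp [hev2, Finset.prod_mul_distrib, hζ]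
  have hroot : Polynomial.aeval ζ (tens l.length A).charpoly = 0 := by
    have h1 := C_root_of_eig _ ζ V hV0 hT
    rw [hAC, tens_map, RingHom.mapMatrix_apply, Matrix.charpoly_map, Polynomial.IsRoot, Polynomial.eval_map] at h1
    exact h1
  have hK := C_order ζ (k*2) (by omega) hζ1 _ (Matrix.charpoly_monic _) hroot
  rw [Matrix.charpoly_natDegree_eq_dim, Fintype.card_fun, Fintype.card_fin, Fintype.card_fin] at hK
  have hK' : ζ ^ (Nat.factorial (2 * n ^ n)) = 1 := by
    obtain ⟨c, hc⟩ := Nat.factorial_dvd_factorial (m := 2 * n ^ l.length) (n := 2 * n ^ n)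
      (Nat.mul_le_mul_left _ (Nat.pow_le_pow_right (by omega) (by omega)))
    rw [hc, pow_mul, hK, one_pow]
  have hinj : Function.Injective f := Int.cast_injective
  apply hinj
  rw [map_zero, ← Gd_map, ← hAC, Gd, ← Matrix.exists_mulVec_eq_zero_iff]
  refine ⟨V, hV0, ?_⟩
  have hdet : AC.det = 1 := by rw [hAC, ← RingHom.map_det, hA, map_one]
  rw [Matrix.sub_mulVec, C_pow_mulVec _ _ _ hT, hdet, one_pow, one_smul, Matrix.one_mulVec,
    mul_comm, pow_mul, hK', one_pow, one_smul, sub_self]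

end PartC

section PartD
open Matrix

theorem D_SZ {σ F : Type*} [Fintype σ] [DecidableEq σ] [Field F] [Fintype F] [DecidableEq F]
    (Q : MvPolynomial σ F) (hQ : Q ≠ 0) :
    (Finset.univ.filter fun x : σ → F => MvPolynomial.eval x Q = 0).card * Fintype.card F ≤
      Q.totalDegree * Fintype.card F ^ Fintype.card σ := by
  classical
  let e := Fintype.equivFin σ
  have hQ' : MvPolynomial.rename e Q ≠ 0 := by
    intro h
    apply hQ
    apply MvPolynomial.rename_injective _ e.injective
    rw [h, map_zero]
  have h := MvPolynomial.schwartz_zippel_totalDegree hQ' (Finset.univ : Finset F)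
  have hc : (Finset.univ.filter fun x : σ → F => MvPolynomial.eval x Q = 0).card =
      (Finset.filter (fun f => MvPolynomial.eval f (MvPolynomial.rename e Q) = 0)
        (Fintype.piFinset fun _ : Fin (Fintype.card σ) => (Finset.univ : Finset F))).card := by
    refine Finset.card_bij (fun x _ => x ∘ e.symm) ?_ ?_ ?_
    · intro x hx
      simp only [Finset.mem_filter, Fintype.mem_piFinset, Finset.mem_univ, true_and, implies_true] at hx ⊢
      rw [MvPolynomial.eval_rename]
      simpa [Function.comp_assoc] using hx
    · intro x _ y _ hxy
      exact e.symm.surjective.injective_comp_right hxy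
    · intro y hy
      refine ⟨y ∘ e, ?_, ?_⟩
      · simp only [Finset.mem_filter, Fintype.mem_piFinset, Finset.mem_univ, true_and, implies_true] at hy ⊢
        rwa [MvPolynomial.eval_rename] at hy
      · ext i; simp
  rw [← hc, Finset.card_univ] at h
  have hpos : (0 : ℚ≥0) < Fintype.card F := by exact_mod_cast Fintype.card_pos
  rw [div_le_div_iff₀ (by positivity) hpos] at h
  have h' : (Finset.univ.filter fun x : σ → F => MvPolynomial.eval x Q = 0).card * Fintype.card F ≤
      (MvPolynomial.rename e Q).totalDegree * Fintype.card F ^ Fintype.card σ := by exact_mod_cast h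
  exact h'.trans (Nat.mul_le_mul_right _ (MvPolynomial.totalDegree_rename_le _ _))

/-- zero count over matrices -/
theorem D_SZM {n : ℕ} {F : Type*} [Field F] [Fintype F] [DecidableEq F]
    (Q : MvPolynomial (Fin n × Fin n) F) (hQ : Q ≠ 0) :
    (Finset.univ.filter fun A : Matrix (Fin n) (Fin n) F =>
      MvPolynomial.eval (fun ij => A ij.1 ij.2) Q = 0).card * Fintype.card F ≤
      Q.totalDegree * Fintype.card F ^ (n * n) := by
  have h := D_SZ Q hQ
  rw [Fintype.card_prod, Fintype.card_fin] at h
  convert h using 2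
  refine Finset.card_bij (fun A _ => fun ij => A ij.1 ij.2) ?_ ?_ ?_
  · intro A hA; simpa using hA
  · intro A _ B _ hAB
    ext i j; exact congrFun hAB (i, j)
  · intro y hy
    exact ⟨Matrix.of fun i j => y (i, j), by simpa using hy, rfl⟩

theorem D_count {n : ℕ} (hn : 0 < n) {F : Type*} [Field F] [Fintype F] [DecidableEq F]
    (Q : MvPolynomial (Fin n × Fin n) F) (hQ : Q ≠ 0)
    (hscal : ∀ (c : F) (A : Matrix (Fin n) (Fin n) F), MvPolynomial.eval (fun ij => A ij.1 ij.2) Q = 0 →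
      MvPolynomial.eval (fun ij => (c • A) ij.1 ij.2) Q = 0)
    (D E : ℕ) (hD : Q.totalDegree ≤ D)
    (hE : (Matrix.det (mvPolynomialX (Fin n) (Fin n) F)).totalDegree ≤ E)
    (hEq : E ≤ Fintype.card F) :
    ((Finset.univ.filter fun B : SpecialLinearGroup (Fin n) F =>
      MvPolynomial.eval (fun ij => (B : Matrix (Fin n) (Fin n) F) ij.1 ij.2) Q = 0).card : ℝ) * (Fintype.card F - E) ≤
     n * D * Fintype.card (SpecialLinearGroup (Fin n) F) := by
  classical
  set Bad := (Finset.univ.filter fun B : SpecialLinearGroup (Fin n) F =>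
      MvPolynomial.eval (fun ij => (B : Matrix (Fin n) (Fin n) F) ij.1 ij.2) Q = 0) with hBad
  set Z := (Finset.univ.filter fun A : Matrix (Fin n) (Fin n) F =>
      MvPolynomial.eval (fun ij => A ij.1 ij.2) Q = 0) with hZ
  set Zd := (Finset.univ.filter fun A : Matrix (Fin n) (Fin n) F =>
      MvPolynomial.eval (fun ij => A ij.1 ij.2) (Matrix.det (mvPolynomialX (Fin n) (Fin n) F)) = 0) with hZd
  set q := Fintype.card F with hq
  have hZle : Z.card * q ≤ D * q ^ (n*n) := (D_SZM Q hQ).trans (Nat.mul_le_mul_right _ hD)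
  have hZdle : Zd.card * q ≤ E * q ^ (n*n) :=
    (D_SZM _ (Matrix.det_mvPolynomialX_ne_zero (Fin n) F)).trans (Nat.mul_le_mul_right _ hE)
  have hZdmem : ∀ A, A ∈ Zd ↔ A.det = 0 := by
    intro A
    rw [hZd, Finset.mem_filter, Matrix.eval_det_mvPolynomialX]
    simp only [Finset.mem_univ, true_and]
    rfl
  have h1 : Fintype.card Fˣ * Bad.card ≤ n * Z.card := by
    have := Finset.card_le_mul_card_image_of_maps_to (s := (Finset.univ : Finset Fˣ) ×ˢ Bad) (t := Z)
      (f := fun x => (x.1 : F) • (x.2 : Matrix (Fin n) (Fin n) F)) ?_ n ?_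
    · rwa [Finset.card_product, Finset.card_univ] at this
    · rintro ⟨c, B⟩ hcB
      simp only [Finset.mem_product, hBad, hZ, Finset.mem_filter, Finset.mem_univ, true_and] at hcB ⊢
      exact hscal _ _ hcB
    · intro A _
      have hle : (Polynomial.nthRoots n A.det).toFinset.card ≤ n :=
        (Multiset.toFinset_card_le _).trans (Polynomial.card_nthRoots _ _)
      refine le_trans ?_ hle
      refine Finset.card_le_card_of_injOn (fun x => (x.1 : F)) ?_ ?_
      · rintro ⟨c, B⟩ hcB
        simp only [Finset.coe_filter, Set.mem_ofPred_eq] at hcB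
        simp only [Multiset.mem_toFinset, Finset.mem_coe]
        rw [Polynomial.mem_nthRoots hn, ← hcB.2, Matrix.det_smul]
        simp
      · rintro ⟨c, B⟩ hcB ⟨c', B'⟩ hcB' hcc
        simp only [Finset.coe_filter, Set.mem_ofPred_eq] at hcB hcB' hcc
        have hcc' : c = c' := Units.ext hcc
        subst hcc'
        have h3 := hcB.2.trans hcB'.2.symm
        have h4 : (B : Matrix (Fin n) (Fin n) F) = B' := smul_right_injective _ c.ne_zero h3
        rw [Subtype.ext h4]
  have h2 : Fintype.card (Matrix (Fin n) (Fin n) F) - Zd.card ≤ Fintype.card Fˣ * Fintype.card (SpecialLinearGroup (Fin n) F) := by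
    rw [← Finset.card_compl, ← Fintype.card_prod]
    let i0 : Fin n := ⟨0, hn⟩
    refine Finset.card_le_card_of_surjOn
      (fun x : Fˣ × SpecialLinearGroup (Fin n) F => Matrix.diagonal (Function.update 1 i0 (x.1 : F)) * (x.2 : Matrix (Fin n) (Fin n) F)) ?_
    intro A hA
    have hA' : A.det ≠ 0 := by simpa [hZdmem] using hA
    have hdet : ∀ c : F, (Matrix.diagonal (Function.update (1 : Fin n → F) i0 c)).det = c := by
      intro c
      rw [Matrix.det_diagonal, Finset.prod_update_of_mem (Finset.mem_univ _)]
      simp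
    refine ⟨(Units.mk0 _ hA', ⟨Matrix.diagonal (Function.update 1 i0 (A.det)⁻¹) * A, ?_⟩), by simp, ?_⟩
    · rw [Matrix.det_mul, hdet, inv_mul_cancel₀ hA']
    · simp only [Units.val_mk0]
      rw [← Matrix.mul_assoc, Matrix.diagonal_mul_diagonal]
      convert Matrix.one_mul A
      rw [← Matrix.diagonal_one]
      congr 1
      ext i
      by_cases hi : i = i0
      · subst hi; simp [hA']
      · simp [hi]
  have hcM : Fintype.card (Matrix (Fin n) (Fin n) F) = q ^ (n*n) := by
    rw [Fintype.card_congr (Matrix.of (m := Fin n) (n := Fin n) (α := F)).symm]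
    simp [hq, pow_mul]
  have hu : 0 < Fintype.card Fˣ := Fintype.card_pos
  rw [hcM] at h2
  have hqpos : 0 < q := Fintype.card_pos
  have h2' : q ^ (n*n) ≤ Fintype.card Fˣ * Fintype.card (SpecialLinearGroup (Fin n) F) + Zd.card := by omega
  generalize q ^ (n*n) = R at *
  set U := Fintype.card Fˣ
  set SL := Fintype.card (SpecialLinearGroup (Fin n) F)
  have g1 : (U:ℝ) * Bad.card ≤ n * Z.card := by exact_mod_cast h1
  have g2 : (R:ℝ) ≤ U * SL + Zd.card := by exact_mod_cast h2'
  have g3 : (Z.card:ℝ) * q ≤ D * R := by exact_mod_cast hZle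
  have g4 : (Zd.card:ℝ) * q ≤ E * R := by exact_mod_cast hZdle
  have g5 : (E:ℝ) ≤ q := by exact_mod_cast hEq
  have gq : (0:ℝ) < q := by exact_mod_cast hqpos
  have gU : (0:ℝ) < U := by exact_mod_cast hu
  have g6 : (R:ℝ) * (q - E) ≤ U * SL * q := by nlinarith
  have g7 : (U:ℝ) * Bad.card * q ≤ n * D * R := by
    calc (U:ℝ) * Bad.card * q ≤ n * Z.card * q := by gcongr
      _ = n * (Z.card * q) := by ring
      _ ≤ n * (D * R) := by gcongr
      _ = _ := by ring
  have g8 : (U * q : ℝ) * (Bad.card * (q - E)) ≤ (U * q) * (n * D * SL) := by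
    calc (U * q : ℝ) * (Bad.card * (q - E)) = (U * Bad.card * q) * (q - E) := by ring
      _ ≤ (n * D * R) * (q - E) := mul_le_mul_of_nonneg_right g7 (by linarith)
      _ = n * D * (R * (q - E)) := by ring
      _ ≤ n * D * (U * SL * q) := by gcongr
      _ = _ := by ring
  exact le_of_mul_le_mul_left g8 (by positivity)

end PartD

section PartE
open Matrix
open scoped Pointwise

theorem E_deg {σ R R' : Type*} [CommRing R] [CommRing R'] (f : R →+* R') (P : MvPolynomial σ R) :
    (MvPolynomial.map f P).totalDegree ≤ P.totalDegree :=
  Finset.sup_mono (MvPolynomial.support_map_subset f P)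

/-- the product of the test functions, as an integer polynomial in the entries -/
noncomputable def Gpoly (n K : ℕ) : MvPolynomial (Fin n × Fin n) ℤ :=
  ∏ d ∈ Finset.Ioo 0 n, Gd K d (mvPolynomialX (Fin n) (Fin n) ℤ)

theorem E_eval {n K : ℕ} {R : Type*} [CommRing R] (f : ℤ →+* R) (A : Matrix (Fin n) (Fin n) R) :
    MvPolynomial.eval (fun ij => A ij.1 ij.2) (MvPolynomial.map f (Gpoly n K)) =
      ∏ d ∈ Finset.Ioo 0 n, Gd K d A := by
  rw [MvPolynomial.eval_map, ← MvPolynomial.coe_eval₂Hom, Gpoly, map_prod]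
  refine Finset.prod_congr rfl fun d _ => ?_
  rw [← Gd_map]
  congr 1
  exact mvPolynomialX_map_eval₂ f A

theorem E_main (n : ℕ) (hn : 2 ≤ n)
    (S : Finset (SpecialLinearGroup (Fin n) ℤ))
    (hS : Subgroup.closure (S : Set (SpecialLinearGroup (Fin n) ℤ)) = ⊤) (ε : ℝ) (hε : 0 < ε)
    (P : SpecialLinearGroup (Fin n) ℤ → Prop) [DecidablePred P]
    (hP : ∀ M, P M → ∃ d, 0 < d ∧ d < n ∧
      Gd (Nat.factorial (2 * n ^ n)) d (M : Matrix (Fin n) (Fin n) ℤ) = 0) :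
    ∀ᶠ L : ℕ in Filter.atTop,
      ((Finset.univ.filter fun w : Fin L → {x // x ∈ S} =>
        P (List.ofFn fun i => (w i : SpecialLinearGroup (Fin n) ℤ)).prod).card : ℝ) /
        (S.card : ℝ) ^ L ≤ ε := by
  classical
  set K := Nat.factorial (2 * n ^ n) with hK
  have hKpos : 0 < K := Nat.factorial_pos _
  haveI : Nontrivial (Fin n) := Fin.nontrivial_iff_two_le.2 hn
  set D := (Gpoly n K).totalDegree with hD
  set E := (Matrix.det (mvPolynomialX (Fin n) (Fin n) ℤ)).totalDegree with hE
  set N : ℤ := ∏ d ∈ Finset.Ioo 0 n, Gd K d (Matrix.diagonal fun i : Fin n => (Nat.nth Nat.Prime i : ℤ)) with hN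
  have hN0 : N ≠ 0 := by
    rw [hN, Finset.prod_ne_zero_iff]
    intro d hd
    rw [Finset.mem_Ioo] at hd
    exact Gd_diag K d hKpos hd.1 hd.2
  obtain ⟨r, hr⟩ := exists_nat_gt ((n : ℝ) * D / (ε / 2))
  obtain ⟨p, hple, hp⟩ := Nat.exists_infinite_primes (5 + E + N.natAbs + r)
  haveI : Fact p.Prime := ⟨hp⟩
  set f := Int.castRingHom (ZMod p) with hf
  set Q := MvPolynomial.map f (Gpoly n K) with hQdef
  have hQ : Q ≠ 0 := by
    intro h0
    have h1 := E_eval (n := n) (K := K) f (f.mapMatrix (Matrix.diagonal fun i : Fin n => (Nat.nth Nat.Prime i : ℤ)))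
    rw [← hQdef, h0, map_zero] at h1
    simp_rw [Gd_map] at h1
    rw [← map_prod, ← hN] at h1
    have h2 : ((N : ℤ) : ZMod p) = 0 := h1.symm
    rw [ZMod.intCast_zmod_eq_zero_iff_dvd] at h2
    have h3 := Nat.le_of_dvd (Int.natAbs_pos.2 hN0) (Int.natCast_dvd.1 h2)
    omega
  have hQe : ∀ A : Matrix (Fin n) (Fin n) (ZMod p),
      MvPolynomial.eval (fun ij => A ij.1 ij.2) Q = 0 ↔ ∃ d ∈ Finset.Ioo 0 n, Gd K d A = 0 := by
    intro A
    rw [hQdef, E_eval, Finset.prod_eq_zero_iff]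
  have hdetE : (Matrix.det (mvPolynomialX (Fin n) (Fin n) (ZMod p))).totalDegree ≤ E := by
    have : Matrix.det (mvPolynomialX (Fin n) (Fin n) (ZMod p)) =
        MvPolynomial.map f (Matrix.det (mvPolynomialX (Fin n) (Fin n) ℤ)) := by
      rw [RingHom.map_det]
      congr 1
      ext i j
      simp [mvPolynomialX]
    rw [this]
    exact E_deg _ _
  have hcount := D_count (by omega : 0 < n) Q hQ
    (by
      intro c A hA
      rw [hQe] at hA ⊢
      obtain ⟨d, hd, h⟩ := hA
      exact ⟨d, hd, Gd_smul K d c A h⟩) D E (E_deg _ _) hdetE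
    (by rw [ZMod.card]; omega)
  rw [ZMod.card] at hcount
  set φ := SpecialLinearGroup.map (n := Fin n) f with hφ
  have h2 : (2 : ZMod p) ≠ 0 := by
    intro h
    have : ((2 : ℕ) : ZMod p) = 0 := by exact_mod_cast h
    rw [ZMod.natCast_eq_zero_iff] at this
    have := Nat.le_of_dvd (by norm_num) this
    omega
  have h4 : (2 : ZMod p) ^ 2 ≠ 1 := by
    intro h
    have : ((3 : ℕ) : ZMod p) = 0 := by
      push_cast
      linear_combination h
    rw [ZMod.natCast_eq_zero_iff] at this
    have := Nat.le_of_dvd (by norm_num) this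
    omega
  have hperf := A_perfect (ι := Fin n) (2 : ZMod p) h2 h4
  have hsurj : Function.Surjective φ := A_surj (ι := Fin n) p
  have hSne : S.Nonempty := by
    rw [Finset.nonempty_iff_ne_empty]
    rintro rfl
    simp only [Finset.coe_empty, Subgroup.closure_empty] at hS
    haveI : Nontrivial (SpecialLinearGroup (Fin n) ℤ) := by
      obtain ⟨i, j, hij⟩ := exists_pair_ne (Fin n)
      refine ⟨⟨1, ⟨1 + single i j 1, ?_⟩, ?_⟩⟩
      · exact (SpecialLinearGroup.transvection hij (1 : ℤ)).2
      · intro h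
        have := congrArg (fun M : SpecialLinearGroup (Fin n) ℤ => (M : Matrix (Fin n) (Fin n) ℤ) i j) h
        simp [hij] at this
    exact bot_ne_top hS
  set s : {x // x ∈ S} → SpecialLinearGroup (Fin n) (ZMod p) := fun x => φ x with hs
  have hrange : Set.range s = φ '' (S : Set _) := by
    ext x; simp [hs]
  have hne : (Set.range s).Nonempty := by
    rw [hrange]; exact (Finset.coe_nonempty.2 hSne).image _
  have hcl : Subgroup.closure (Set.range s) = ⊤ := by
    rw [hrange, ← MonoidHom.map_closure, hS, ← MonoidHom.range_eq_map, MonoidHom.range_eq_top]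
    exact hsurj
  obtain ⟨m, hm⟩ := B_cover hperf (Set.range s) hne hcl
  have hm1 : Set.range s ^ (m + 1) = Set.univ := by
    rw [pow_succ, hm]
    obtain ⟨x, hx⟩ := hne
    rw [Set.eq_univ_iff_forall]
    intro y
    exact Set.mem_mul.2 ⟨y * x⁻¹, Set.mem_univ _, x, hx, by group⟩
  have hword : ∀ h, ∃ w : Fin (m + 1) → {x // x ∈ S}, (List.ofFn fun i => s (w i)).prod = h := by
    intro h
    have : h ∈ Set.range s ^ (m + 1) := by rw [hm1]; trivial
    rw [Set.mem_pow] at this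
    obtain ⟨g, hg⟩ := this
    choose w hw using fun i => (g i).2
    exact ⟨w, by simp_rw [hw]; exact hg⟩
  have hmix := B_mix s (m + 1) (Nat.succ_pos _) hword
    (fun B => MvPolynomial.eval (fun ij => (B : Matrix (Fin n) (Fin n) (ZMod p)) ij.1 ij.2) Q = 0)
    (ε / 2) (by positivity)
  filter_upwards [hmix] with L hL
  rw [Fintype.card_coe] at hL
  set BS := (Finset.univ.filter fun B : SpecialLinearGroup (Fin n) (ZMod p) =>
      MvPolynomial.eval (fun ij => (B : Matrix (Fin n) (Fin n) (ZMod p)) ij.1 ij.2) Q = 0) with hBS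
  have hbound : (BS.card : ℝ) / Fintype.card (SpecialLinearGroup (Fin n) (ZMod p)) ≤ ε / 2 := by
    have hcpos : (0 : ℝ) < Fintype.card (SpecialLinearGroup (Fin n) (ZMod p)) := by
      exact_mod_cast Fintype.card_pos
    rw [div_le_iff₀ hcpos]
    have hpE : (r : ℝ) ≤ (p : ℝ) - E := by
      have : r + E ≤ p := by omega
      have : (r : ℝ) + E ≤ p := by exact_mod_cast this
      linarith
    have hpE5 : (0 : ℝ) < (p : ℝ) - E := by
      have : E < p := by omega
      have : (E : ℝ) < p := by exact_mod_cast this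
      linarith
    rw [div_lt_iff₀ (by positivity)] at hr
    have h5 : (n : ℝ) * D ≤ ε / 2 * (p - E) := by nlinarith
    have h6 : (BS.card : ℝ) * (p - E) ≤
        (ε / 2 * Fintype.card (SpecialLinearGroup (Fin n) (ZMod p))) * (p - E) := by
      refine hcount.trans ?_
      nlinarith
    exact le_of_mul_le_mul_right h6 hpE5
  refine le_trans ?_ (hL.trans (by linarith))
  refine div_le_div_of_nonneg_right (Nat.cast_le.2 (Finset.card_le_card ?_)) (by positivity)
  refine Finset.monotone_filter_right _ ?_
  intro w _ hPw
  show MvPolynomial.eval _ Q = 0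
  obtain ⟨d, hd0, hdn, hG⟩ := hP _ hPw
  have hprod : (List.ofFn fun i => s (w i)).prod =
      φ (List.ofFn fun i => (w i : SpecialLinearGroup (Fin n) ℤ)).prod := by
    rw [map_list_prod, List.map_ofFn]
    rfl
  rw [hprod, hQe]
  refine ⟨d, Finset.mem_Ioo.2 ⟨hd0, hdn⟩, ?_⟩
  have : ((φ (List.ofFn fun i => (w i : SpecialLinearGroup (Fin n) ℤ)).prod :
      SpecialLinearGroup (Fin n) (ZMod p)) : Matrix (Fin n) (Fin n) (ZMod p)) =
      f.mapMatrix ((List.ofFn fun i => (w i : SpecialLinearGroup (Fin n) ℤ)).prod :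
        SpecialLinearGroup (Fin n) ℤ) := rfl
  rw [this, Gd_map, hG, map_zero]

end PartE

open scoped Classical in
/-- the proportion of words of length `L` in a finite generating
set of `SL(n, ℤ)` whose product `M_w` has the property that the characteristic
polynomial of every power `M_w^k` (`k ≥ 1`) is irreducible over `ℚ` tends to
`1` as `L → ∞`. -/
theorem stmt12 (n : ℕ) (hn : 2 ≤ n)
    (S : Finset (Matrix.SpecialLinearGroup (Fin n) ℤ))
    (hS : Subgroup.closure (S : Set (Matrix.SpecialLinearGroup (Fin n) ℤ)) = ⊤) :
    Filter.Tendsto (fun L : ℕ =>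
        ((Finset.univ.filter (fun w : Fin L → {x // x ∈ S} =>
            let M : Matrix.SpecialLinearGroup (Fin n) ℤ :=
              (List.ofFn fun i => (w i : Matrix.SpecialLinearGroup (Fin n) ℤ)).prod
            ∀ k : ℕ, 1 ≤ k →
              Irreducible
                ((Matrix.charpoly ((M ^ k : Matrix.SpecialLinearGroup (Fin n) ℤ) :
                    Matrix (Fin n) (Fin n) ℤ)).map (algebraMap ℤ ℚ)))).card : ℝ) /
        ((S.card : ℝ) ^ L))
      Filter.atTop (nhds 1) := by
  classical
  have hSpos : 0 < S.card := by
    rw [Finset.card_pos, Finset.nonempty_iff_ne_empty]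
    rintro rfl
    haveI : Nontrivial (Fin n) := Fin.nontrivial_iff_two_le.2 hn
    simp only [Finset.coe_empty, Subgroup.closure_empty] at hS
    obtain ⟨i, j, hij⟩ := exists_pair_ne (Fin n)
    have hmem : Matrix.SpecialLinearGroup.transvection hij (1 : ℤ) ∈
        (⊥ : Subgroup (Matrix.SpecialLinearGroup (Fin n) ℤ)) := by rw [hS]; trivial
    rw [Subgroup.mem_bot] at hmem
    have h1 := congrArg (fun M : Matrix.SpecialLinearGroup (Fin n) ℤ =>
      (M : Matrix (Fin n) (Fin n) ℤ) i j) hmem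
    have h2 : ((Matrix.SpecialLinearGroup.transvection hij (1 : ℤ) :
        Matrix.SpecialLinearGroup (Fin n) ℤ) : Matrix (Fin n) (Fin n) ℤ) =
        1 + Matrix.single i j 1 := rfl
    simp [h2, hij] at h1
  set good : Matrix.SpecialLinearGroup (Fin n) ℤ → Prop := fun M => ∀ k : ℕ, 1 ≤ k →
    Irreducible ((Matrix.charpoly ((M ^ k : Matrix.SpecialLinearGroup (Fin n) ℤ) :
      Matrix (Fin n) (Fin n) ℤ)).map (algebraMap ℤ ℚ)) with hgood
  have hbad : ∀ M, ¬ good M → ∃ d, 0 < d ∧ d < n ∧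
      Gd (Nat.factorial (2 * n ^ n)) d (M : Matrix (Fin n) (Fin n) ℤ) = 0 := by
    intro M hM
    rw [hgood] at hM
    push Not at hM
    obtain ⟨k, hk, h⟩ := hM
    rw [Matrix.SpecialLinearGroup.coe_pow] at h
    exact C_bad hn _ M.2 k hk h
  rw [Metric.tendsto_atTop']
  intro ε hε
  obtain ⟨L0, hL0⟩ := Filter.eventually_atTop.1 (E_main n hn S hS (ε / 2) (by positivity)
    (fun M => ¬ good M) hbad)
  refine ⟨L0, fun L hL => ?_⟩
  have hb := hL0 L hL.le
  have hsum := Finset.card_filter_add_card_filter_not (s := (Finset.univ : Finset (Fin L → {x // x ∈ S})))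
    (fun w => good (List.ofFn fun i => (w i : Matrix.SpecialLinearGroup (Fin n) ℤ)).prod)
  rw [Finset.card_univ, Fintype.card_fun, Fintype.card_fin, Fintype.card_coe] at hsum
  have hsum' : ((Finset.univ.filter fun w : Fin L → {x // x ∈ S} =>
      good (List.ofFn fun i => (w i : Matrix.SpecialLinearGroup (Fin n) ℤ)).prod).card : ℝ) +
      ((Finset.univ.filter fun w : Fin L → {x // x ∈ S} =>
      ¬ good (List.ofFn fun i => (w i : Matrix.SpecialLinearGroup (Fin n) ℤ)).prod).card : ℝ) =
      (S.card : ℝ) ^ L := by exact_mod_cast hsum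
  have hpos : (0 : ℝ) < (S.card : ℝ) ^ L := by positivity
  change dist (((Finset.univ.filter fun w : Fin L → {x // x ∈ S} =>
      good (List.ofFn fun i => (w i : Matrix.SpecialLinearGroup (Fin n) ℤ)).prod).card : ℝ) /
      (S.card : ℝ) ^ L) 1 < ε
  have hx : ((Finset.univ.filter fun w : Fin L → {x // x ∈ S} =>
      good (List.ofFn fun i => (w i : Matrix.SpecialLinearGroup (Fin n) ℤ)).prod).card : ℝ) /
      (S.card : ℝ) ^ L - 1 = - (((Finset.univ.filter fun w : Fin L → {x // x ∈ S} =>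
      ¬ good (List.ofFn fun i => (w i : Matrix.SpecialLinearGroup (Fin n) ℤ)).prod).card : ℝ) /
      (S.card : ℝ) ^ L) := by
    rw [← hsum'] at hpos ⊢
    field_simp
    ring
  rw [Real.dist_eq, hx, abs_neg, abs_of_nonneg (by positivity)]
  linarith
end
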